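/- arXiv:0712.0469 — 6 statements merged into one kernel-verified Lean document; each statement's English description precedes it below -/
import Mathlib

section
/- Assume n ≥ 2 and C is an n×n matrix with all entries positive. Then there exists δ > 0, depending only on C, such that for every admissible weight function g with L⁻(g) ≥ δ, the map u_g has at least two distinct fixed points in Σ. -/
open Set Matrix

/-- An admissible weight function. -/
def IsAdmissible (g g' : ℝ → ℝ) : Prop :=
  (∀ x ∈ Set.Icc (0:ℝ) 1, HasDerivWithinAt g (g' x) (Set.Icc (0:ℝ) 1) x) ∧
  ContinuousOn g' (Set.Icc (0:ℝ) 1) ∧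
  g 0 = 1 ∧
  (∀ x ∈ Set.Icc (0:ℝ) 1, 0 < g x) ∧
  (∀ x ∈ Set.Icc (0:ℝ) 1, 0 < g' x)

/-- The set of values `g'(x)/g(x)` for `x ∈ [0,1]`; its minimum is `L⁻(g)`. -/
def ratioSet (g g' : ℝ → ℝ) : Set ℝ := (fun x => g' x / g x) '' Set.Icc (0:ℝ) 1

/-- The stochastic matrix `M_g(x)`. -/
noncomputable def Mg {n : ℕ} (C : Matrix (Fin n) (Fin n) ℝ) (g : ℝ → ℝ)
    (x : Fin n → ℝ) : Matrix (Fin n) (Fin n) ℝ :=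
  Matrix.of fun i j => C i j * g (x j) / ∑ k, C i k * g (x k)

/-- Knaster-Tarski on a box. -/
lemma tarski_box {ι : Type*} (lo hi : ι → ℝ) (hlh : lo ≤ hi) (F : (ι → ℝ) → (ι → ℝ))
    (hmap : ∀ p ∈ Icc lo hi, F p ∈ Icc lo hi)
    (hmono : ∀ p ∈ Icc lo hi, ∀ q ∈ Icc lo hi, p ≤ q → F p ≤ F q) :
    ∃ p ∈ Icc lo hi, F p = p := by
  let S : Set (ι → ℝ) := {p | p ∈ Icc lo hi ∧ p ≤ F p}
  have hlo : lo ∈ S := ⟨⟨le_refl _, hlh⟩, (hmap lo ⟨le_refl _, hlh⟩).1⟩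
  let x : ι → ℝ := fun i => sSup ((fun p => p i) '' S)
  have hbdd : ∀ i, BddAbove ((fun p : ι → ℝ => p i) '' S) := by
    intro i
    refine ⟨hi i, ?_⟩
    rintro _ ⟨p, hp, rfl⟩
    exact hp.1.2 i
  have hub : ∀ p ∈ S, p ≤ x := fun p hp i => le_csSup (hbdd i) ⟨p, hp, rfl⟩
  have hleast : ∀ y : ι → ℝ, (∀ p ∈ S, p ≤ y) → x ≤ y := by
    intro y hy i
    refine csSup_le (Set.Nonempty.image _ ⟨lo, hlo⟩) ?_
    rintro _ ⟨p, hp, rfl⟩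
    exact hy p hp i
  have hx : x ∈ Icc lo hi := ⟨hub lo hlo, hleast hi fun p hp => hp.1.2⟩
  have h1 : x ≤ F x := hleast _ fun p hp => hp.2.trans (hmono p hp.1 x hx (hub p hp))
  have h2 : F x ∈ S := ⟨hmap x hx, hmono x hx _ (hmap x hx) h1⟩
  exact ⟨x, hx, le_antisymm (hub _ h2) h1⟩

lemma growth (g g' : ℝ → ℝ) (Lm δ : ℝ) (hg : IsAdmissible g g')
    (hL : IsLeast (ratioSet g g') Lm) (hδ : δ ≤ Lm) :
    ∀ a ∈ Icc (0:ℝ) 1, ∀ b ∈ Icc (0:ℝ) 1, a ≤ b → g a * Real.exp (δ * (b - a)) ≤ g b := by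
  obtain ⟨hd, _, _, hpos, _⟩ := hg
  have hr : ∀ x ∈ Icc (0:ℝ) 1, δ * g x ≤ g' x := by
    intro x hx
    have := hδ.trans (hL.2 ⟨x, hx, rfl⟩)
    exact (le_div_iff₀ (hpos x hx)).1 this
  have hder : ∀ x ∈ Icc (0:ℝ) 1, HasDerivWithinAt (fun x => g x * Real.exp (-δ * x))
      (g' x * Real.exp (-δ * x) + g x * (Real.exp (-δ * x) * (-δ))) (Icc (0:ℝ) 1) x := by
    intro x hx
    have h2 : HasDerivAt (fun x : ℝ => Real.exp (-δ * x)) (Real.exp (-δ * x) * (-δ)) x := by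
      have h3 : HasDerivAt (fun x : ℝ => -δ * x) (-δ) x := by
        simpa using (hasDerivAt_id x).const_mul (-δ)
      exact h3.exp
    exact (hd x hx).mul h2.hasDerivWithinAt
  have hm : MonotoneOn (fun x => g x * Real.exp (-δ * x)) (Icc (0:ℝ) 1) := by
    apply monotoneOn_of_hasDerivWithinAt_nonneg (convex_Icc 0 1)
      (f' := fun x => g' x * Real.exp (-δ * x) + g x * (Real.exp (-δ * x) * (-δ)))
    · exact fun x hx => (hder x hx).continuousWithinAt
    · intro x hx
      exact (hder x (interior_subset hx)).mono interior_subset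
    · intro x hx
      have := hr x (interior_subset hx)
      have he := Real.exp_pos (-δ * x)
      nlinarith
  intro a ha b hb hab
  have h := hm ha hb hab
  simp only at h
  have e1 : Real.exp (δ * (b - a)) = Real.exp (-δ * a) * Real.exp (δ * b) := by
    rw [← Real.exp_add]; ring_nf
  have e2 : Real.exp (-δ * b) * Real.exp (δ * b) = 1 := by
    rw [← Real.exp_add]; simp
  have := mul_le_mul_of_nonneg_right h (Real.exp_pos (δ * b)).le
  calc g a * Real.exp (δ * (b - a)) = g a * Real.exp (-δ * a) * Real.exp (δ * b) := by
        rw [e1]; ring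
    _ ≤ g b * Real.exp (-δ * b) * Real.exp (δ * b) := this
    _ = g b := by rw [mul_assoc, e2, mul_one]

/-- algebraic fixed point conclusion -/
lemma fixed_of_eq {n : ℕ} (C : Matrix (Fin n) (Fin n) ℝ) (hC : ∀ i j, 0 < C i j)
    (g : ℝ → ℝ) (x : Fin n → ℝ) (m : Fin n) (hg : ∀ i, 0 < g (x i))
    (h : ∀ j, j ≠ m → ∑ i, x i * (C i j * g (x j) / ∑ k, C i k * g (x k)) = x j) :
    Matrix.vecMul x (Mg C g x) = x := by
  have key : ∀ j, Matrix.vecMul x (Mg C g x) j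
      = ∑ i, x i * (C i j * g (x j) / ∑ k, C i k * g (x k)) := by
    intro j
    simp [Matrix.vecMul, dotProduct, Mg]
  have hD : ∀ i, 0 < ∑ k, C i k * g (x k) := fun i =>
    Finset.sum_pos (fun k _ => mul_pos (hC i k) (hg k)) ⟨m, Finset.mem_univ _⟩
  have hsum : ∑ j, Matrix.vecMul x (Mg C g x) j = ∑ j, x j := by
    simp_rw [key]
    rw [Finset.sum_comm]
    refine Finset.sum_congr rfl fun i _ => ?_
    rw [← Finset.mul_sum, ← Finset.sum_div, div_self (hD i).ne', mul_one]
  have hrest : ∀ j, j ≠ m → Matrix.vecMul x (Mg C g x) j = x j := fun j hj => by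
    rw [key, h j hj]
  funext j
  by_cases hj : j = m
  · subst hj
    rw [← Finset.add_sum_erase _ _ (Finset.mem_univ j),
      ← Finset.add_sum_erase _ x (Finset.mem_univ j)] at hsum
    rw [Finset.sum_congr rfl (fun k hk => hrest k (Finset.ne_of_mem_erase hk))] at hsum
    linarith
  · exact hrest j hj

lemma core {n : ℕ} (C : Matrix (Fin n) (Fin n) ℝ) (hC : ∀ i j, 0 < C i j)
    (K : ℝ) (hK1 : 1 ≤ K) (hK : ∀ i j k l, C i j ≤ K * C k l)
    (lam η δ : ℝ) (hlam : lam = K ^ 2 + 1) (hη0 : 0 < η) (hη : lam * (n * η) = 1 / 2)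
    (hδ1 : 2 * lam ≤ δ) (hδ2 : 2 * K ≤ η * (δ / 2))
    (g : ℝ → ℝ) (hgpos : ∀ x ∈ Icc (0:ℝ) 1, 0 < g x)
    (hgrow : ∀ a ∈ Icc (0:ℝ) 1, ∀ b ∈ Icc (0:ℝ) 1, a ≤ b →
      g a * Real.exp (δ * (b - a)) ≤ g b) (m : Fin n) :
    ∃ x ∈ stdSimplex ℝ (Fin n), 3 / 4 ≤ x m ∧ Matrix.vecMul x (Mg C g x) = x := by
  have hn : (1:ℝ) ≤ n := by
    have : 0 < n := m.pos
    exact_mod_cast this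
  have hlam2 : 2 ≤ lam := by nlinarith
  have hKpos : 0 < K := by linarith
  have hnη : n * η ≤ 1 / 4 := by nlinarith
  have hη14 : η ≤ 1 / 4 := by nlinarith
  have hgmono : ∀ a ∈ Icc (0:ℝ) 1, ∀ b ∈ Icc (0:ℝ) 1, a ≤ b → g a ≤ g b := by
    intro a ha b hb hab
    refine le_trans ?_ (hgrow a ha b hb hab)
    have : 1 ≤ Real.exp (δ * (b - a)) := Real.one_le_exp (by
      apply mul_nonneg <;> linarith)
    have := hgpos a ha
    nlinarith
  let s : (Fin n → ℝ) → ℝ := fun p => ∑ k ∈ Finset.univ.erase m, p k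
  let D : Fin n → (Fin n → ℝ) → (Fin n → ℝ) → ℝ := fun i p B =>
    C i m * (1 - lam * s p) + ∑ k ∈ Finset.univ.erase m, C i k * (p k / B k)
  let T : Fin n → (Fin n → ℝ) → (Fin n → ℝ) → ℝ := fun j p B =>
    C m j * ((1 - s p) / D m p B) + ∑ i ∈ Finset.univ.erase m, C i j * (p i / D i p B)
  let Ph : Fin n → (Fin n → ℝ) → (Fin n → ℝ) → ℝ := fun j p B =>
    B j * (g (p j) * ((1 - lam * s p) / g (1 - s p)))
  -- the box
  let okp : (Fin n → ℝ) → Prop := fun p => ∀ i, 0 ≤ p i ∧ p i ≤ η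
  let okB : (Fin n → ℝ) → Prop := fun B => ∀ i, K⁻¹ ≤ B i ∧ B i ≤ 2 * K
  have hs0 : ∀ p, okp p → 0 ≤ s p := fun p hp => Finset.sum_nonneg fun i _ => (hp i).1
  have hs1 : ∀ p, okp p → s p ≤ n * η := by
    intro p hp
    calc s p ≤ ∑ k, p k := Finset.sum_le_sum_of_subset_of_nonneg (Finset.erase_subset _ _)
          (fun i _ _ => (hp i).1)
      _ ≤ ∑ k : Fin n, η := Finset.sum_le_sum fun i _ => (hp i).2
      _ = n * η := by simp
  have hs2 : ∀ p, okp p → lam * s p ≤ 1 / 2 := by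
    intro p hp
    have := hs1 p hp
    nlinarith
  have hsm : ∀ p q, p ≤ q → s p ≤ s q := fun p q h => Finset.sum_le_sum fun i _ => h i
  have hBpos : ∀ B, okB B → ∀ i, 0 < B i := fun B hB i =>
    lt_of_lt_of_le (inv_pos.2 hKpos) (hB i).1
  have hDlow : ∀ i p B, okp p → okB B → C i m / 2 ≤ D i p B := by
    intro i p B hp hB
    have h1 : 0 ≤ ∑ k ∈ Finset.univ.erase m, C i k * (p k / B k) :=
      Finset.sum_nonneg fun k _ => mul_nonneg (hC i k).le
        (div_nonneg (hp k).1 (hBpos B hB k).le)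
    have h2 := hs2 p hp
    have h3 := hC i m
    have : C i m * (1/2) ≤ C i m * (1 - lam * s p) :=
      mul_le_mul_of_nonneg_left (by linarith) h3.le
    show C i m / 2 ≤ C i m * (1 - lam * s p) + _
    linarith
  have hDpos : ∀ i p B, okp p → okB B → 0 < D i p B := fun i p B hp hB =>
    lt_of_lt_of_le (by linarith [hC i m]) (hDlow i p B hp hB)
  -- E decomposition
  let E : Fin n → (Fin n → ℝ) → (Fin n → ℝ) → ℝ := fun i p B =>
    ∑ k ∈ Finset.univ.erase m, (K ^ 2 * C i m - C i k / B k) * p k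
  have hDE : ∀ i p B, D i p B = C i m * (1 - s p) - E i p B := by
    intro i p B
    have : E i p B = K ^ 2 * C i m * s p - ∑ k ∈ Finset.univ.erase m, C i k * (p k / B k) := by
      show ∑ k ∈ Finset.univ.erase m, _ = K ^ 2 * C i m * ∑ k ∈ Finset.univ.erase m, p k - _
      rw [Finset.mul_sum, ← Finset.sum_sub_distrib]
      refine Finset.sum_congr rfl fun k _ => ?_
      ring
    rw [this]
    show C i m * (1 - lam * s p) + _ = _
    rw [hlam]; ring
  have hcoef : ∀ i k B, okB B → 0 ≤ K ^ 2 * C i m - C i k / B k := by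
    intro i k B hB
    have h1 : C i k / B k ≤ K * C i k := by
      rw [div_le_iff₀ (hBpos B hB k)]
      have : K⁻¹ * K = 1 := inv_mul_cancel₀ hKpos.ne'
      have h2 : 1 ≤ K * B k := by nlinarith [(hB k).1]
      nlinarith [hC i k]
    have h2 := hK i k i m
    nlinarith
  have hE0 : ∀ i p B, okp p → okB B → 0 ≤ E i p B := fun i p B hp hB =>
    Finset.sum_nonneg fun k _ => mul_nonneg (hcoef i k B hB) (hp k).1
  have hEm : ∀ i p B q B', okp p → okB B → okp q → okB B' → p ≤ q → B ≤ B' →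
      E i p B ≤ E i q B' := by
    intro i p B q B' hp hB hq hB' hpq hBB
    refine Finset.sum_le_sum fun k _ => ?_
    refine mul_le_mul ?_ (hpq k) (hp k).1 (hcoef i k B' hB')
    have : C i k / B' k ≤ C i k / B k :=
      div_le_div_of_nonneg_left (hC i k).le (hBpos B hB k) (hBB k)
    linarith
  have hDm : ∀ i p B q B', okp p → okB B → okp q → okB B' → p ≤ q → B ≤ B' →
      D i q B' ≤ D i p B := by
    intro i p B q B' hp hB hq hB' hpq hBB
    rw [hDE, hDE]
    have h1 := hEm i p B q B' hp hB hq hB' hpq hBB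
    have h2 := hsm p q hpq
    have := hC i m
    nlinarith
  have hTm : ∀ j p B q B', okp p → okB B → okp q → okB B' → p ≤ q → B ≤ B' →
      T j p B ≤ T j q B' := by
    intro j p B q B' hp hB hq hB' hpq hBB
    refine add_le_add (mul_le_mul_of_nonneg_left ?_ (hC m j).le)
      (Finset.sum_le_sum fun i _ => mul_le_mul_of_nonneg_left ?_ (hC i j).le)
    · rw [div_le_div_iff₀ (hDpos m p B hp hB) (hDpos m q B' hq hB'), hDE, hDE]
      have h1 := hEm m p B q B' hp hB hq hB' hpq hBB
      have h2 := hsm p q hpq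
      have h3 := hE0 m p B hp hB
      have h4 : s q ≤ 1 / 4 := (hs1 q hq).trans hnη
      have h5 : (1 - s q) * E m p B ≤ (1 - s p) * E m q B' :=
        mul_le_mul (by linarith) h1 h3 (by linarith)
      nlinarith
    · exact div_le_div₀ (hq i).1 (hpq i) (hDpos i q B' hq hB')
        (hDm i p B q B' hp hB hq hB' hpq hBB)
  have hTlow : ∀ j p B, okp p → okB B → K⁻¹ ≤ T j p B := by
    intro j p B hp hB
    have h0 : okp (fun _ => 0) := fun i => ⟨le_refl _, hη0.le⟩
    refine le_trans ?_ (hTm j (fun _ => 0) B p B h0 hB hp hB (fun i => (hp i).1) le_rfl)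
    have : T j (fun _ => 0) B = C m j / C m m := by
      simp [T, D, s, div_eq_mul_inv]
    rw [this, inv_eq_one_div, div_le_div_iff₀ hKpos (hC m m)]
    linarith [hK m m m j]
  have hCD : ∀ i j p B, okp p → okB B → C i j / D i p B ≤ 2 * K := by
    intro i j p B hp hB
    rw [div_le_iff₀ (hDpos i p B hp hB)]
    have h1 := hDlow i p B hp hB
    have h2 := hK i j i m
    nlinarith
  have hThigh : ∀ j p B, okp p → okB B → T j p B ≤ 2 * K := by
    intro j p B hp hB
    have h4 : s p ≤ 1 / 4 := (hs1 p hp).trans hnη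
    have h5 : T j p B ≤ (2 * K) * (1 - s p) + ∑ i ∈ Finset.univ.erase m, (2 * K) * p i := by
      refine add_le_add ?_ (Finset.sum_le_sum fun i _ => ?_)
      · have := mul_le_mul_of_nonneg_right (hCD m j p B hp hB)
          (show 0 ≤ 1 - s p by linarith)
        calc _ = C m j / D m p B * (1 - s p) := by ring
          _ ≤ _ := this
      · have := mul_le_mul_of_nonneg_right (hCD i j p B hp hB) (hp i).1
        calc _ = C i j / D i p B * p i := by ring
          _ ≤ _ := this
    rw [← Finset.mul_sum] at h5
    have : T j p B ≤ (2 * K) * (1 - s p) + (2 * K) * s p := h5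
    linarith
  have hpI : ∀ p, okp p → ∀ i, p i ∈ Icc (0:ℝ) 1 := fun p hp i =>
    ⟨(hp i).1, by linarith [(hp i).2]⟩
  have hsI : ∀ p, okp p → 1 - s p ∈ Icc (0:ℝ) 1 := fun p hp =>
    ⟨by linarith [hs1 p hp], by linarith [hs0 p hp]⟩
  have hqpos : ∀ p, okp p → 0 < (1 - lam * s p) / g (1 - s p) := fun p hp =>
    div_pos (by linarith [hs2 p hp]) (hgpos _ (hsI p hp))
  have hPm : ∀ j p B q B', okp p → okB B → okp q → okB B' → p ≤ q → B ≤ B' →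
      Ph j p B ≤ Ph j q B' := by
    intro j p B q B' hp hB hq hB' hpq hBB
    have hgp := hgpos _ (hpI p hp j)
    have hgq := hgpos _ (hpI q hq j)
    refine mul_le_mul (hBB j) (mul_le_mul (hgmono _ (hpI p hp j) _ (hpI q hq j) (hpq j)) ?_
      (hqpos p hp).le hgq.le) (mul_pos hgp (hqpos p hp)).le (hBpos B' hB' j).le
    rw [div_le_div_iff₀ (hgpos _ (hsI p hp)) (hgpos _ (hsI q hq))]
    have h2 := hsm p q hpq
    have h3 := hgrow _ (hsI q hq) _ (hsI p hp) (by linarith)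
    have h4 := Real.add_one_le_exp (δ * ((1 - s p) - (1 - s q)))
    have hg0 := hgpos _ (hsI q hq)
    have h5 : g (1 - s q) * (δ * ((1 - s p) - (1 - s q)) + 1) ≤ g (1 - s p) :=
      (mul_le_mul_of_nonneg_left h4 hg0.le).trans h3
    have h6 := hs2 q hq
    have h7 : (1 - lam * s p) ≤ (1 - lam * s q) * (δ * ((1 - s p) - (1 - s q)) + 1) := by
      have h8 : 0 ≤ s q - s p := by linarith
      have h9 : lam ≤ (1 - lam * s q) * δ := by nlinarith
      have := mul_le_mul_of_nonneg_right h9 h8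
      nlinarith
    calc (1 - lam * s p) * g (1 - s q)
        ≤ ((1 - lam * s q) * (δ * ((1 - s p) - (1 - s q)) + 1)) * g (1 - s q) :=
          mul_le_mul_of_nonneg_right h7 hg0.le
      _ = (1 - lam * s q) * (g (1 - s q) * (δ * ((1 - s p) - (1 - s q)) + 1)) := by ring
      _ ≤ _ := mul_le_mul_of_nonneg_left h5 (by linarith)
  have hPlow : ∀ j p B, okp p → okB B → 0 ≤ Ph j p B := fun j p B hp hB =>
    mul_nonneg (hBpos B hB j).le (mul_pos (hgpos _ (hpI p hp j)) (hqpos p hp)).le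
  have hPhigh : ∀ j p B, okp p → okB B → Ph j p B ≤ η := by
    intro j p B hp hB
    have h4 : s p ≤ 1 / 4 := (hs1 p hp).trans hnη
    have hpj := (hp j).2
    have h3 := hgrow _ (hpI p hp j) _ (hsI p hp) (by linarith)
    have h5 := Real.add_one_le_exp (δ * ((1 - s p) - p j))
    have h6 : δ / 2 ≤ δ * ((1 - s p) - p j) := by nlinarith
    have hg0 := hgpos _ (hpI p hp j)
    have hg1 := hgpos _ (hsI p hp)
    have h7 : g (p j) * (δ / 2) ≤ g (1 - s p) :=
      (mul_le_mul_of_nonneg_left (by linarith) hg0.le).trans h3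
    have h8 : Ph j p B = B j * (g (p j) * (1 - lam * s p)) / g (1 - s p) := by
      simp only [Ph]; ring
    rw [h8, div_le_iff₀ hg1]
    have h9 : 0 ≤ lam * s p := mul_nonneg (by linarith) (hs0 p hp)
    have h10 := hs2 p hp
    calc B j * (g (p j) * (1 - lam * s p)) ≤ (2 * K) * (g (p j) * 1) := by
          refine mul_le_mul (hB j).2 (mul_le_mul_of_nonneg_left (by linarith) hg0.le)
            (mul_nonneg hg0.le (by linarith)) (by linarith)
      _ ≤ (η * (δ / 2)) * (g (p j) * 1) := mul_le_mul_of_nonneg_right hδ2 (by linarith)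
      _ = η * (g (p j) * (δ / 2)) := by ring
      _ ≤ η * g (1 - s p) := mul_le_mul_of_nonneg_left h7 hη0.le
  -- Tarski
  have hKK : K⁻¹ ≤ 2 * K := by
    have : K⁻¹ ≤ 1 := inv_le_one_of_one_le₀ hK1
    linarith
  obtain ⟨w, hw, hfix⟩ := tarski_box (ι := Fin n ⊕ Fin n)
    (Sum.elim (fun _ => 0) (fun _ => K⁻¹)) (Sum.elim (fun _ => η) (fun _ => 2 * K))
    (by rintro (i | i); exacts [hη0.le, hKK])
    (fun w => Sum.elim (fun j => Ph j (fun i => w (Sum.inl i)) (fun i => w (Sum.inr i)))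
      (fun j => T j (fun i => w (Sum.inl i)) (fun i => w (Sum.inr i))))
    (by
      intro w hw
      have hp : okp (fun i => w (Sum.inl i)) := fun i => ⟨hw.1 (Sum.inl i), hw.2 (Sum.inl i)⟩
      have hB : okB (fun i => w (Sum.inr i)) := fun i => ⟨hw.1 (Sum.inr i), hw.2 (Sum.inr i)⟩
      constructor
      · rintro (i | i)
        exacts [hPlow i _ _ hp hB, hTlow i _ _ hp hB]
      · rintro (i | i)
        exacts [hPhigh i _ _ hp hB, hThigh i _ _ hp hB])
    (by
      intro w hw v hv hwv
      have hp : okp (fun i => w (Sum.inl i)) := fun i => ⟨hw.1 (Sum.inl i), hw.2 (Sum.inl i)⟩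
      have hB : okB (fun i => w (Sum.inr i)) := fun i => ⟨hw.1 (Sum.inr i), hw.2 (Sum.inr i)⟩
      have hp' : okp (fun i => v (Sum.inl i)) := fun i => ⟨hv.1 (Sum.inl i), hv.2 (Sum.inl i)⟩
      have hB' : okB (fun i => v (Sum.inr i)) := fun i => ⟨hv.1 (Sum.inr i), hv.2 (Sum.inr i)⟩
      rintro (i | i)
      · exact hPm i _ _ _ _ hp hB hp' hB' (fun i => hwv _) (fun i => hwv _)
      · exact hTm i _ _ _ _ hp hB hp' hB' (fun i => hwv _) (fun i => hwv _))
  have hp : okp (fun i => w (Sum.inl i)) := fun i => ⟨hw.1 (Sum.inl i), hw.2 (Sum.inl i)⟩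
  have hB : okB (fun i => w (Sum.inr i)) := fun i => ⟨hw.1 (Sum.inr i), hw.2 (Sum.inr i)⟩
  obtain ⟨p, hpdef⟩ : ∃ p : Fin n → ℝ, p = fun i => w (Sum.inl i) := ⟨_, rfl⟩
  obtain ⟨B, hBdef⟩ : ∃ B : Fin n → ℝ, B = fun i => w (Sum.inr i) := ⟨_, rfl⟩
  have hfp : ∀ j, Ph j p B = p j := by
    subst hpdef hBdef
    exact fun j => congrFun hfix (Sum.inl j)
  have hfB : ∀ j, T j p B = B j := by
    subst hpdef hBdef
    exact fun j => congrFun hfix (Sum.inr j)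
  rw [← hpdef] at hp
  rw [← hBdef] at hB
  clear hpdef hBdef hfix hw
  have h4 : s p ≤ 1 / 4 := (hs1 p hp).trans hnη
  let x : Fin n → ℝ := fun i => if i = m then 1 - s p else p i
  have hxm : x m = 1 - s p := by simp [x]
  have hxk : ∀ k, k ≠ m → x k = p k := fun k hk => by simp [x, hk]
  have hxI : ∀ i, x i ∈ Icc (0:ℝ) 1 := by
    intro i
    by_cases hi : i = m
    · rw [hi, hxm]; exact hsI p hp
    · rw [hxk i hi]; exact hpI p hp i
  have hr := hqpos p hp
  obtain ⟨r, hrdef⟩ : ∃ r : ℝ, r = (1 - lam * s p) / g (1 - s p) := ⟨_, rfl⟩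
  rw [← hrdef] at hr
  have hpB : ∀ k, p k / B k = g (p k) * r := by
    intro k
    rw [div_eq_iff (hBpos B hB k).ne', hrdef]
    have : B k * (g (p k) * ((1 - lam * s p) / g (1 - s p))) = p k := hfp k
    linarith
  have hDr : ∀ i, D i p B = r * ∑ k, C i k * g (x k) := by
    intro i
    rw [← Finset.add_sum_erase _ _ (Finset.mem_univ m), mul_add, Finset.mul_sum, hxm]
    refine congrArg₂ (· + ·) ?_ (Finset.sum_congr rfl fun k hk => ?_)
    · rw [hrdef]
      have := (hgpos _ (hsI p hp)).ne'
      field_simp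
    · rw [hxk k (Finset.ne_of_mem_erase hk), hpB]; ring
  have hTr : ∀ j, B j = ∑ i, C i j * (x i / D i p B) := by
    intro j
    rw [← Finset.add_sum_erase _ _ (Finset.mem_univ m), hxm]
    refine (hfB j).symm.trans (congrArg₂ (· + ·) rfl (Finset.sum_congr rfl fun k hk => ?_))
    · rw [hxk k (Finset.ne_of_mem_erase hk)]
  have hgx : ∀ i, 0 < g (x i) := fun i => hgpos _ (hxI i)
  refine ⟨x, ⟨fun i => (hxI i).1, ?_⟩, by rw [hxm]; linarith, ?_⟩
  · rw [← Finset.add_sum_erase _ _ (Finset.mem_univ m), hxm,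
      Finset.sum_congr rfl (fun k hk => hxk k (Finset.ne_of_mem_erase hk))]
    show 1 - s p + s p = 1
    ring
  · refine fixed_of_eq C hC g x m hgx fun j hj => ?_
    have h5 : x j = g (x j) * r * B j := by
      have := hpB j
      rw [div_eq_iff (hBpos B hB j).ne', ← hxk j hj] at this
      exact this
    have h6 : g (x j) * r * B j
        = ∑ i, x i * (C i j * g (x j) / ∑ k, C i k * g (x k)) := by
      rw [hTr j, Finset.mul_sum]
      refine Finset.sum_congr rfl fun i _ => ?_
      rw [hDr i]
      have hD : 0 < ∑ k, C i k * g (x k) :=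
        Finset.sum_pos (fun k _ => mul_pos (hC i k) (hgx k)) ⟨m, Finset.mem_univ _⟩
      have := hD.ne'
      have := hr.ne'
      field_simp
    rw [← h6, ← h5]

/-- If `C` is a positive `(n+2) × (n+2)` matrix (size at least 2), then for `L⁻(g)`
large enough (depending only on `C`), the map `u_g` has at least two distinct fixed
points in the simplex. -/
theorem multiple_fixed_points_for_positive_matrix
    (n : ℕ) (C : Matrix (Fin (n+2)) (Fin (n+2)) ℝ)
    (hCpos : ∀ i j, 0 < C i j) :
    ∃ δ : ℝ, 0 < δ ∧
      ∀ g g' : ℝ → ℝ, ∀ Lm : ℝ, IsAdmissible g g' →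
        IsLeast (ratioSet g g') Lm → δ ≤ Lm →
        ∀ u : (Fin (n+2) → ℝ) → (Fin (n+2) → ℝ),
          (∀ x ∈ stdSimplex ℝ (Fin (n+2)), u x ∈ stdSimplex ℝ (Fin (n+2)) ∧
            Matrix.vecMul (u x) (Mg C g x) = u x ∧
            ∀ v ∈ stdSimplex ℝ (Fin (n+2)), Matrix.vecMul v (Mg C g x) = v → v = u x) →
          ∃ x y : Fin (n+2) → ℝ, x ∈ stdSimplex ℝ (Fin (n+2)) ∧
            y ∈ stdSimplex ℝ (Fin (n+2)) ∧ x ≠ y ∧ u x = x ∧ u y = y := by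
  obtain ⟨K, hK1, hK⟩ : ∃ K : ℝ, 1 ≤ K ∧ ∀ i j k l, C i j ≤ K * C k l := by
    obtain ⟨K, hK⟩ := Finite.exists_le
      (fun t : (Fin (n+2) × Fin (n+2)) × (Fin (n+2) × Fin (n+2)) =>
        C t.1.1 t.1.2 / C t.2.1 t.2.2)
    refine ⟨max 1 K, le_max_left _ _, fun i j k l => ?_⟩
    have := (hK ((i, j), (k, l))).trans (le_max_right 1 K)
    exact (div_le_iff₀ (hCpos k l)).1 this
  have hKpos : 0 < K := by linarith
  obtain ⟨lam, hlam⟩ : ∃ lam : ℝ, lam = K ^ 2 + 1 := ⟨_, rfl⟩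
  have hlampos : 0 < lam := by rw [hlam]; positivity
  obtain ⟨η, hη⟩ : ∃ η : ℝ, η = 1 / (2 * lam * ((n + 2 : ℕ) : ℝ)) := ⟨_, rfl⟩
  have hNpos : (0:ℝ) < ((n + 2 : ℕ) : ℝ) := by positivity
  have hη0 : 0 < η := by rw [hη]; positivity
  have hη1 : lam * (((n + 2 : ℕ) : ℝ) * η) = 1 / 2 := by
    rw [hη]
    have := hNpos.ne'
    field_simp
  have hq : 0 < 4 * K / η := by positivity
  refine ⟨2 * lam + 4 * K / η, by positivity, ?_⟩
  intro g g' Lm hg hL hδ u hu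
  have hgrow := growth g g' Lm _ hg hL hδ
  have hδ2 : 2 * K ≤ η * ((2 * lam + 4 * K / η) / 2) := by
    have : η * ((2 * lam + 4 * K / η) / 2) = η * lam + 2 * K := by
      field_simp
      ring
    rw [this]
    nlinarith
  have hcore := core C hCpos K hK1 hK lam η _ hlam hη0 hη1
    (show 2 * lam ≤ 2 * lam + 4 * K / η by linarith) hδ2 g hg.2.2.2.1 hgrow
  obtain ⟨x, hx, hx0, hxf⟩ := hcore 0
  obtain ⟨y, hy, hy1, hyf⟩ := hcore 1
  refine ⟨x, y, hx, hy, ?_, ((hu x hx).2.2 x hx hxf).symm, ((hu y hy).2.2 y hy hyf).symm⟩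
  rintro rfl
  have h01 : (0 : Fin (n+2)) ≠ 1 := by simp
  have h2 : x 0 + x 1 ≤ ∑ i, x i := by
    rw [← Finset.sum_pair h01]
    exact Finset.sum_le_sum_of_subset_of_nonneg (Finset.subset_univ _) fun i _ _ => hx.1 i
  rw [hx.2] at h2
  linarith
end

section
/- In the damped model, if n·L⁺(g₁) + (n−1)·L⁺(g₂) ≤ 1, then the map u has a unique fixed point x* in Σ, x* ∈ int(Σ), and for every x ∈ Σ the iterates u^s(x) converge to x* as s → ∞. -/
open Set Matrix Filter Topology

/-- A weight function for the damped model: either admissible (continuously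
differentiable, `g 0 = 1`, `g' > 0` on `[0,1]`) or the constant function `1`
(with derivative `0`). -/
def IsWeight (g g' : ℝ → ℝ) : Prop :=
  (∀ x ∈ Set.Icc (0:ℝ) 1, HasDerivWithinAt g (g' x) (Set.Icc (0:ℝ) 1) x) ∧
  ContinuousOn g' (Set.Icc (0:ℝ) 1) ∧
  g 0 = 1 ∧
  (∀ x ∈ Set.Icc (0:ℝ) 1, 0 < g x) ∧
  ((∀ x ∈ Set.Icc (0:ℝ) 1, 0 < g' x) ∨
    ((∀ x ∈ Set.Icc (0:ℝ) 1, g x = 1) ∧ ∀ x ∈ Set.Icc (0:ℝ) 1, g' x = 0))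

/-- The damped transition matrix
`M(x)_{ij} = γ·C_{ij} g₁(x_j)/Σ_k C_{ik} g₁(x_k) + (1−γ)·d_j g₂(x_j)/Σ_k d_k g₂(x_k)`. -/
noncomputable def Md {n : ℕ} (C : Matrix (Fin n) (Fin n) ℝ) (d : Fin n → ℝ)
    (γ : ℝ) (g₁ g₂ : ℝ → ℝ) (x : Fin n → ℝ) : Matrix (Fin n) (Fin n) ℝ :=
  Matrix.of fun i j =>
    γ * (C i j * g₁ (x j) / ∑ k, C i k * g₁ (x k)) +
    (1 - γ) * (d j * g₂ (x j) / ∑ k, d k * g₂ (x k))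


/-- `p` is stationary for the generator with off-diagonal rates `m`. -/
def StatD {n : ℕ} (m : Matrix (Fin n) (Fin n) ℝ) (p : Fin n → ℝ) : Prop :=
  ∀ l, ∑ k, p k * m k l = p l * ∑ k, m l k

lemma stat_exists {n : ℕ} (hn : 0 < n) (m : Matrix (Fin n) (Fin n) ℝ)
    (hm : ∀ i j, 0 < m i j) : ∃ p : Fin n → ℝ, (∀ i, 0 < p i) ∧ StatD m p := by
  have : Nonempty (Fin n) := ⟨⟨0, hn⟩⟩
  set G : Matrix (Fin n) (Fin n) ℝ := m - Matrix.diagonal (fun i => ∑ k, m i k) with hG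
  have hr : ∃ v ≠ 0, G *ᵥ v = 0 := by
    refine ⟨fun _ => 1, ?_, ?_⟩
    · intro h
      have := congrFun h ⟨0, hn⟩
      simp at this
    · ext i
      rw [hG, Matrix.sub_mulVec, Pi.sub_apply, Matrix.mulVec_diagonal]
      simp [Matrix.mulVec, dotProduct]
  have hdet := Matrix.exists_mulVec_eq_zero_iff.mp hr
  obtain ⟨v, hv0, hv⟩ := Matrix.exists_vecMul_eq_zero_iff.mpr hdet
  have hst : StatD m v := by
    intro l
    have := congrFun hv l
    rw [hG, Matrix.vecMul_sub, Pi.sub_apply, Matrix.vecMul_diagonal] at this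
    simp only [Matrix.vecMul, dotProduct, Pi.zero_apply] at this
    linarith
  have hle : ∀ l ∈ (Finset.univ : Finset (Fin n)),
      |v l| * ∑ k, m l k ≤ ∑ k, |v k| * m k l := by
    intro l _
    have h1 : |v l| * ∑ k, m l k = |v l * ∑ k, m l k| := by
      rw [abs_mul, abs_of_nonneg (Finset.sum_nonneg fun k _ => (hm l k).le)]
    rw [h1, ← hst l]
    refine (Finset.abs_sum_le_sum_abs _ _).trans (le_of_eq ?_)
    refine Finset.sum_congr rfl fun k _ => ?_
    rw [abs_mul, abs_of_pos (hm k l)]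
  have hsum : ∑ l, |v l| * ∑ k, m l k = ∑ l, ∑ k, |v k| * m k l := by
    rw [Finset.sum_comm]
    simp only [Finset.mul_sum]
  have heq := (Finset.sum_eq_sum_iff_of_le hle).mp hsum
  refine ⟨fun i => |v i|, ?_, fun l => (heq l (Finset.mem_univ l)).symm⟩
  intro i
  obtain ⟨j, hj⟩ := Function.ne_iff.mp hv0
  have hpos : 0 < ∑ k, |v k| * m k i :=
    Finset.sum_pos' (fun k _ => mul_nonneg (abs_nonneg _) (hm k i).le)
      ⟨j, Finset.mem_univ j, mul_pos (abs_pos.mpr hj) (hm j i)⟩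
  rw [← heq i (Finset.mem_univ i)] at hpos
  exact (pos_iff_pos_of_mul_pos hpos).mpr
    (Finset.sum_pos (fun k _ => hm i k) Finset.univ_nonempty)

lemma row_upper {n : ℕ} (m m' : Matrix (Fin n) (Fin n) ℝ) (hm : ∀ i j, 0 < m i j)
    (p p' : Fin n → ℝ) (hp : ∀ i, 0 < p i) (hp' : ∀ i, 0 < p' i)
    (hs : StatD m p) (hs' : StatD m' p') (k : Fin n)
    (hrow : ∀ l, l ≠ k → ∀ j, m' l j = m l j) (b : ℝ) (hb : ∀ j, m' k j ≤ b * m k j)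
    (i : Fin n) (hi : i ≠ k) : p' i * p k ≤ b * p i * p' k := by
  obtain ⟨i₀, hi₀, hmax⟩ := (Finset.univ.erase k).exists_max_image (fun i => p' i / p i)
    ⟨i, Finset.mem_erase.mpr ⟨hi, Finset.mem_univ _⟩⟩
  have hne : i₀ ≠ k := (Finset.mem_erase.mp hi₀).1
  set ρ := p' i₀ / p i₀ with hρ
  have hle : ∀ l, l ≠ k → p' l ≤ ρ * p l := by
    intro l hl
    have := hmax l (Finset.mem_erase.mpr ⟨hl, Finset.mem_univ _⟩)
    exact (div_le_iff₀ (hp l)).mp this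
  have key : ρ * p k ≤ b * p' k := by
    by_contra hcon
    push Not at hcon
    have hlt : ∑ l, p' l * m' l i₀ < ∑ l, ρ * (p l * m l i₀) := by
      apply Finset.sum_lt_sum
      · intro l _
        by_cases hl : l = k
        · subst hl
          nlinarith [mul_le_mul_of_nonneg_left (hb i₀) (hp' l).le,
            mul_lt_mul_of_pos_right hcon (hm l i₀)]
        · rw [hrow l hl]
          nlinarith [mul_le_mul_of_nonneg_right (hle l hl) (hm l i₀).le]
      · refine ⟨k, Finset.mem_univ k, ?_⟩
        nlinarith [mul_le_mul_of_nonneg_left (hb i₀) (hp' k).le,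
            mul_lt_mul_of_pos_right hcon (hm k i₀)]
    rw [← Finset.mul_sum, hs i₀, hs' i₀, Finset.sum_congr rfl (fun j _ => hrow i₀ hne j),
      ← mul_assoc, hρ, div_mul_cancel₀ _ (hp i₀).ne'] at hlt
    exact lt_irrefl _ hlt
  nlinarith [mul_le_mul_of_nonneg_right (hle i hi) (hp k).le,
    mul_le_mul_of_nonneg_left key (hp i).le]

lemma row_lower {n : ℕ} (m m' : Matrix (Fin n) (Fin n) ℝ) (hm' : ∀ i j, 0 < m' i j)
    (p p' : Fin n → ℝ) (hp : ∀ i, 0 < p i) (hp' : ∀ i, 0 < p' i)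
    (hs : StatD m p) (hs' : StatD m' p') (k : Fin n)
    (hrow : ∀ l, l ≠ k → ∀ j, m' l j = m l j) (a : ℝ) (ha0 : 0 < a)
    (ha : ∀ j, a * m k j ≤ m' k j)
    (i : Fin n) (hi : i ≠ k) : a * p i * p' k ≤ p' i * p k := by
  have := row_upper m' m hm' p' p hp' hp hs' hs k (fun l hl j => (hrow l hl j).symm) a⁻¹
    (fun j => by rw [inv_mul_eq_div, le_div_iff₀ ha0]; linarith [ha j]) i hi
  have h2 := mul_le_mul_of_nonneg_left this ha0.le
  have h3 : a * (a⁻¹ * p' i * p k) = p' i * p k := by field_simp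
  linarith

lemma multi_row {n : ℕ} (hn : 0 < n) (m m' : Matrix (Fin n) (Fin n) ℝ)
    (hm : ∀ i j, 0 < m i j) (hm' : ∀ i j, 0 < m' i j)
    (p : Fin n → ℝ) (hp : ∀ i, 0 < p i) (hs : StatD m p)
    (a b : ℝ) (ha0 : 0 < a) (hb0 : 0 < b)
    (ha : ∀ i j, a * m i j ≤ m' i j) (hb : ∀ i j, m' i j ≤ b * m i j)
    (i j : Fin n) (hij : i ≠ j) (T : Finset (Fin n)) :
    ∀ q : Fin n → ℝ, (∀ i, 0 < q i) →
      StatD (Matrix.of fun k l => if k ∈ T then m' k l else m k l) q →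
      a ^ (T.erase j).card * (q i * p j) ≤ b ^ (T.erase i).card * (p i * q j) := by
  induction T using Finset.induction_on with
  | empty =>
    intro q hq hsq
    have := row_upper m _ hm p q hp hq hs hsq j (by simp) 1 (by simp) i hij
    simpa using this
  | insert k T hk ih =>
    intro q hq hsq
    set mT : Matrix (Fin n) (Fin n) ℝ := Matrix.of fun k l => if k ∈ T then m' k l else m k l
      with hmT
    set mU : Matrix (Fin n) (Fin n) ℝ :=
      Matrix.of fun k' l => if k' ∈ insert k T then m' k' l else m k' l with hmU
    have hposT : ∀ i j, 0 < mT i j := by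
      intro i j; simp only [hmT, Matrix.of_apply]; split_ifs; exacts [hm' i j, hm i j]
    have hposU : ∀ i j, 0 < mU i j := by
      intro i j; simp only [hmU, Matrix.of_apply]; split_ifs; exacts [hm' i j, hm i j]
    obtain ⟨r, hr, hsr⟩ := stat_exists hn mT hposT
    have hI := ih r hr hsr
    have hrow : ∀ l, l ≠ k → ∀ j, mU l j = mT l j := by
      intro l hl j; simp [hmT, hmU, Finset.mem_insert, hl]
    have up := row_upper mT mU hposT r q hr hq hsr hsq k hrow b
      (fun j => by simpa [hmT, hmU, hk] using hb k j)
    have lo := row_lower mT mU hposU r q hr hq hsr hsq k hrow a ha0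
      (fun j => by simpa [hmT, hmU, hk] using ha k j)
    have hA : 0 < a ^ (T.erase j).card := by positivity
    have hB : 0 < b ^ (T.erase i).card := by positivity
    have step : ∀ A B : ℝ, 0 < A → 0 < B → A * (q i * r j) ≤ B * (r i * q j) →
        A * a ^ (T.erase j).card * (q i * p j) ≤ B * b ^ (T.erase i).card * (p i * q j) := by
      intro A B hA' hB' h
      have h1 := mul_le_mul h hI (mul_nonneg hA.le (mul_pos (hr i) (hp j)).le)
        (mul_nonneg hB'.le (mul_pos (hr i) (hq j)).le)
      have h2 : 0 < r i * r j := mul_pos (hr i) (hr j)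
      refine le_of_mul_le_mul_left ?_ h2
      linarith
    by_cases hki : k = i
    · subst hki
      have e1 : (insert k T).erase k = T := Finset.erase_insert hk
      have e2 : (insert k T).erase j = insert k (T.erase j) :=
        Finset.erase_insert_of_ne hij
      have e3 : T.erase k = T := Finset.erase_eq_of_notMem hk
      rw [e1, e2, Finset.card_insert_of_notMem (by simp [hk]), pow_succ']
      have := step a 1 ha0 one_pos (by have := lo j hij.symm; linarith)
      rw [e3] at this
      simpa using this
    · by_cases hkj : k = j
      · subst hkj
        have e1 : (insert k T).erase k = T := Finset.erase_insert hk
        have e2 : (insert k T).erase i = insert k (T.erase i) :=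
          Finset.erase_insert_of_ne hki
        have e3 : T.erase k = T := Finset.erase_eq_of_notMem hk
        rw [e1, e2, Finset.card_insert_of_notMem (by simp [hk]), pow_succ']
        have := step 1 b one_pos hb0 (by have := up i hij; linarith)
        rw [e3] at this
        simpa using this
      · have e1 : (insert k T).erase j = insert k (T.erase j) :=
          Finset.erase_insert_of_ne hkj
        have e2 : (insert k T).erase i = insert k (T.erase i) :=
          Finset.erase_insert_of_ne hki
        rw [e1, e2, Finset.card_insert_of_notMem (by simp [hk]),
          Finset.card_insert_of_notMem (by simp [hk]), pow_succ', pow_succ']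
        refine step a b ha0 hb0 ?_
        have h1 := up i (Ne.symm hki)
        have h2 := lo j (Ne.symm hkj)
        have h3 := mul_le_mul h1 h2 (by have := hr j; have := hq k; positivity)
          (by have := hr i; have := hq k; positivity)
        have h4 : 0 < r k * q k := mul_pos (hr k) (hq k)
        refine le_of_mul_le_mul_left ?_ h4
        linarith

lemma stat_compare {n : ℕ} (hn : 0 < n) (m m' : Matrix (Fin n) (Fin n) ℝ)
    (hm : ∀ i j, 0 < m i j) (hm' : ∀ i j, 0 < m' i j)
    (p q : Fin n → ℝ) (hp : ∀ i, 0 < p i) (hs : StatD m p)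
    (hq : ∀ i, 0 < q i) (hsq : StatD m' q)
    (a b : ℝ) (ha0 : 0 < a) (hb0 : 0 < b)
    (ha : ∀ i j, a * m i j ≤ m' i j) (hb : ∀ i j, m' i j ≤ b * m i j)
    (i j : Fin n) (hij : i ≠ j) :
    a ^ (n - 1) * (q i * p j) ≤ b ^ (n - 1) * (p i * q j) := by
  have := multi_row hn m m' hm hm' p hp hs a b ha0 hb0 ha hb i j hij Finset.univ q hq
    (by simp only [Finset.mem_univ, if_true]; exact hsq)
  simpa [Finset.card_erase_of_mem] using this

lemma weight_mono {g g' : ℝ → ℝ} (hg : IsWeight g g') : MonotoneOn g (Set.Icc 0 1) := by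
  obtain ⟨hd, -, -, -, h⟩ := hg
  refine monotoneOn_of_hasDerivWithinAt_nonneg (f' := g') (convex_Icc 0 1)
    (fun x hx => (hd x hx).continuousWithinAt)
    (fun x hx => (hd x (interior_subset hx)).mono interior_subset) (fun x hx => ?_)
  rcases h with h | ⟨-, h⟩
  · exact (h x (interior_subset hx)).le
  · exact (h x (interior_subset hx)).ge

lemma weight_L_nonneg {g g' : ℝ → ℝ} (hg : IsWeight g g') {L : ℝ}
    (hL : IsGreatest (ratioSet g g') L) : 0 ≤ L := by
  obtain ⟨x, hx, rfl⟩ := hL.1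
  obtain ⟨-, -, -, hpos, h⟩ := hg
  refine div_nonneg ?_ (hpos x hx).le
  rcases h with h | ⟨-, h⟩
  · exact (h x hx).le
  · exact (h x hx).ge

lemma weight_log {g g' : ℝ → ℝ} (hg : IsWeight g g') {L : ℝ}
    (hL : IsGreatest (ratioSet g g') L) {x y : ℝ} (hx : x ∈ Set.Icc (0:ℝ) 1)
    (hy : y ∈ Set.Icc (0:ℝ) 1) (hyx : y ≤ x) :
    Real.log (g x) - Real.log (g y) ≤ L * (x - y) := by
  obtain ⟨hd, -, -, hpos, h⟩ := hg
  have hD : ∀ t ∈ Set.Icc (0:ℝ) 1, HasDerivWithinAt (fun t => L * t - Real.log (g t))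
      (L - g' t / g t) (Set.Icc 0 1) t := by
    intro t ht
    have h1 := ((hasDerivWithinAt_id t (Set.Icc (0:ℝ) 1)).const_mul L).sub
      ((hd t ht).log (hpos t ht).ne')
    rw [mul_one] at h1
    exact h1
  have hmono : MonotoneOn (fun t => L * t - Real.log (g t)) (Set.Icc 0 1) := by
    refine monotoneOn_of_hasDerivWithinAt_nonneg (f' := fun t => L - g' t / g t)
      (convex_Icc 0 1)
      (fun x hx => (hD x hx).continuousWithinAt)
      (fun x hx => (hD x (interior_subset hx)).mono interior_subset) (fun x hx => ?_)
    exact sub_nonneg.mpr (hL.2 ⟨x, interior_subset hx, rfl⟩)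
  have := hmono hy hx hyx
  simp only at this
  linarith

lemma log_slope {x y κ : ℝ} (hy : 0 < y) (hyx : y ≤ x) (hxκ : x ≤ κ) :
    x - y ≤ κ * (Real.log x - Real.log y) := by
  have hx : 0 < x := hy.trans_le hyx
  have h1 := Real.log_le_sub_one_of_pos (div_pos hy hx)
  rw [Real.log_div hy.ne' hx.ne'] at h1
  have h2 : 1 - y / x = (x - y) / x := by field_simp
  have h3 : (x - y) / x ≤ Real.log x - Real.log y := by linarith
  rw [div_le_iff₀ hx] at h3
  have h4 : 0 ≤ Real.log x - Real.log y := sub_nonneg.mpr (Real.log_le_log hy hyx)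
  nlinarith

lemma weight_bound {g g' : ℝ → ℝ} (hg : IsWeight g g') {L : ℝ}
    (hL : IsGreatest (ratioSet g g') L) {x y κ V : ℝ} (hx : 0 < x) (hy : 0 < y)
    (hxκ : x ≤ κ) (hκ : κ ≤ 1) (hx1 : x ≤ 1) (hy1 : y ≤ 1) (hV0 : 0 ≤ V)
    (hV : Real.log x - Real.log y ≤ V) :
    g x ≤ Real.exp (κ * L * V) * g y := by
  have hL0 := weight_L_nonneg hg hL
  have hκ0 : 0 ≤ κ := hx.le.trans hxκ
  have hgx := hg.2.2.2.1 x ⟨hx.le, hx1⟩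
  have hgy := hg.2.2.2.1 y ⟨hy.le, hy1⟩
  have key : Real.log (g x) - Real.log (g y) ≤ κ * L * V := by
    rcases le_total y x with h | h
    · have h1 := weight_log hg hL ⟨hx.le, hx1⟩ ⟨hy.le, hy1⟩ h
      have h2 := log_slope hy h hxκ
      have h3 : κ * (Real.log x - Real.log y) ≤ κ * V := mul_le_mul_of_nonneg_left hV hκ0
      have h4 := mul_le_mul_of_nonneg_left (h2.trans h3) hL0
      linarith
    · have := weight_mono hg ⟨hx.le, hx1⟩ ⟨hy.le, hy1⟩ h
      have h1 := Real.log_le_log hgx this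
      have : 0 ≤ κ * L * V := by positivity
      linarith
  calc g x = Real.exp (Real.log (g x)) := (Real.exp_log hgx).symm
    _ ≤ Real.exp (κ * L * V + Real.log (g y)) := Real.exp_le_exp.mpr (by linarith)
    _ = Real.exp (κ * L * V) * g y := by rw [Real.exp_add, Real.exp_log hgy]

/-- The unnormalized rates. -/
noncomputable def mD {n : ℕ} (C : Matrix (Fin n) (Fin n) ℝ) (d : Fin n → ℝ)
    (γ : ℝ) (g₁ g₂ : ℝ → ℝ) (x : Fin n → ℝ) : Matrix (Fin n) (Fin n) ℝ :=
  Matrix.of fun i j =>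
    γ * (C i j * g₁ (x j)) * (∑ k, d k * g₂ (x k)) +
    (1 - γ) * (d j * g₂ (x j)) * (∑ k, C i k * g₁ (x k))

lemma stat_mD {n : ℕ} (C : Matrix (Fin n) (Fin n) ℝ) (d : Fin n → ℝ)
    (γ : ℝ) (g₁ g₂ : ℝ → ℝ) (x w : Fin n → ℝ)
    (hT : 0 < ∑ k, d k * g₂ (x k)) (hS : ∀ i, 0 < ∑ k, C i k * g₁ (x k))
    (hw : Matrix.vecMul w (Md C d γ g₁ g₂ x) = w) :
    StatD (mD C d γ g₁ g₂ x) (fun i => w i / ∑ k, C i k * g₁ (x k)) := by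
  intro l
  have h1 : ∑ k, mD C d γ g₁ g₂ x l k
      = (∑ k, C l k * g₁ (x k)) * (∑ k, d k * g₂ (x k)) := by
    simp only [mD, Matrix.of_apply]
    rw [Finset.sum_add_distrib, ← Finset.sum_mul, ← Finset.sum_mul, ← Finset.mul_sum,
      ← Finset.mul_sum]
    ring
  have h2 : ∀ k, (w k / ∑ k', C k k' * g₁ (x k')) * mD C d γ g₁ g₂ x k l
      = (∑ k, d k * g₂ (x k)) * (w k * Md C d γ g₁ g₂ x k l) := by
    intro k
    simp only [mD, Md, Matrix.of_apply]
    have := (hS k).ne'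
    have := hT.ne'
    field_simp
  have h3 := congrFun hw l
  simp only [Matrix.vecMul, dotProduct] at h3
  simp only [h2]
  rw [← Finset.mul_sum, h3, h1]
  have := (hS l).ne'
  field_simp

lemma contraction {n : ℕ} (hn : 0 < n) (C : Matrix (Fin n) (Fin n) ℝ)
    (hC0 : ∀ i j, 0 ≤ C i j) (hrow : ∀ i, ∃ j, 0 < C i j)
    (d : Fin n → ℝ) (hd : ∀ i, 0 < d i)
    (γ : ℝ) (hγ0 : 0 < γ) (hγ1 : γ < 1)
    (g₁ g₁' g₂ g₂' : ℝ → ℝ) (hg₁ : IsWeight g₁ g₁') (hg₂ : IsWeight g₂ g₂')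
    (Lp₁ Lp₂ : ℝ) (hLp₁ : IsGreatest (ratioSet g₁ g₁') Lp₁)
    (hLp₂ : IsGreatest (ratioSet g₂ g₂') Lp₂)
    (hsmall : (n : ℝ) * Lp₁ + ((n : ℝ) - 1) * Lp₂ ≤ 1)
    (x y ux uy : Fin n → ℝ) (κ v V : ℝ) (hκ1 : κ ≤ 1) (hκ0 : 0 ≤ κ)
    (hx : ∀ i, 0 < x i) (hy : ∀ i, 0 < y i) (hxκ : ∀ i, x i ≤ κ) (hyκ : ∀ i, y i ≤ κ)
    (hv0 : v ≤ 0) (hV0 : 0 ≤ V)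
    (hv : ∀ i, v ≤ Real.log (x i) - Real.log (y i))
    (hV : ∀ i, Real.log (x i) - Real.log (y i) ≤ V)
    (hux : ∀ i, 0 < ux i) (huy : ∀ i, 0 < uy i)
    (hux' : Matrix.vecMul ux (Md C d γ g₁ g₂ x) = ux)
    (huy' : Matrix.vecMul uy (Md C d γ g₁ g₂ y) = uy) (i j : Fin n) (hij : i ≠ j) :
    Real.log (ux i) - Real.log (uy i) - (Real.log (ux j) - Real.log (uy j)) ≤ κ * (V - v) := by
  have hne : Nonempty (Fin n) := ⟨i⟩
  have hx1 : ∀ i, x i ≤ 1 := fun i => (hxκ i).trans hκ1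
  have hy1 : ∀ i, y i ≤ 1 := fun i => (hyκ i).trans hκ1
  have up : ∀ {g g' : ℝ → ℝ} (hg : IsWeight g g') {L : ℝ}
      (hL : IsGreatest (ratioSet g g') L) (l : Fin n),
      g (x l) ≤ Real.exp (κ * L * V) * g (y l) := by
    intro g g' hg L hL l
    exact weight_bound hg hL (hx l) (hy l) (hxκ l) hκ1 (hx1 l) (hy1 l) hV0 (hV l)
  have lo : ∀ {g g' : ℝ → ℝ} (hg : IsWeight g g') {L : ℝ}
      (hL : IsGreatest (ratioSet g g') L) (l : Fin n),
      Real.exp (κ * L * v) * g (y l) ≤ g (x l) := by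
    intro g g' hg L hL l
    have := weight_bound (V := -v) hg hL (hy l) (hx l) (hyκ l) hκ1 (hy1 l) (hx1 l)
      (by linarith) (by linarith [hv l])
    have h2 := mul_le_mul_of_nonneg_left this (Real.exp_pos (κ * L * v)).le
    rw [← mul_assoc, ← Real.exp_add] at h2
    simpa using h2
  have hg1x : ∀ l, 0 < g₁ (x l) := fun l => hg₁.2.2.2.1 _ ⟨(hx l).le, hx1 l⟩
  have hg1y : ∀ l, 0 < g₁ (y l) := fun l => hg₁.2.2.2.1 _ ⟨(hy l).le, hy1 l⟩
  have hg2x : ∀ l, 0 < g₂ (x l) := fun l => hg₂.2.2.2.1 _ ⟨(hx l).le, hx1 l⟩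
  have hg2y : ∀ l, 0 < g₂ (y l) := fun l => hg₂.2.2.2.1 _ ⟨(hy l).le, hy1 l⟩
  have hS : ∀ z : Fin n → ℝ, (∀ l, 0 < g₁ (z l)) → ∀ i, 0 < ∑ k, C i k * g₁ (z k) := by
    intro z hz i
    obtain ⟨j, hj⟩ := hrow i
    exact Finset.sum_pos' (fun k _ => mul_nonneg (hC0 i k) (hz k).le)
      ⟨j, Finset.mem_univ j, mul_pos hj (hz j)⟩
  have hT : ∀ z : Fin n → ℝ, (∀ l, 0 < g₂ (z l)) → 0 < ∑ k, d k * g₂ (z k) := fun z hz =>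
    Finset.sum_pos (fun k _ => mul_pos (hd k) (hz k)) Finset.univ_nonempty
  have hmpos : ∀ z : Fin n → ℝ, (∀ l, 0 < g₁ (z l)) → (∀ l, 0 < g₂ (z l)) →
      ∀ i j, 0 < mD C d γ g₁ g₂ z i j := by
    intro z h1 h2 i j
    simp only [mD, Matrix.of_apply]
    have := hS z h1 i
    have := hT z h2
    have := h1 j
    have := h2 j
    have := hC0 i j
    have := hd j
    have : 0 < 1 - γ := by linarith
    positivity
  set a₁ := Real.exp (κ * Lp₁ * v) with ha₁
  set b₁ := Real.exp (κ * Lp₁ * V) with hb₁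
  set a₂ := Real.exp (κ * Lp₂ * v) with ha₂
  set b₂ := Real.exp (κ * Lp₂ * V) with hb₂
  have pa₁ : 0 < a₁ := Real.exp_pos _
  have pb₁ : 0 < b₁ := Real.exp_pos _
  have pa₂ : 0 < a₂ := Real.exp_pos _
  have pb₂ : 0 < b₂ := Real.exp_pos _
  have Sup : ∀ i, ∑ k, C i k * g₁ (x k) ≤ b₁ * ∑ k, C i k * g₁ (y k) := by
    intro i
    rw [Finset.mul_sum]
    refine Finset.sum_le_sum fun k _ => ?_
    linarith [mul_le_mul_of_nonneg_left (up hg₁ hLp₁ k) (hC0 i k)]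
  have Slo : ∀ i, a₁ * ∑ k, C i k * g₁ (y k) ≤ ∑ k, C i k * g₁ (x k) := by
    intro i
    rw [Finset.mul_sum]
    refine Finset.sum_le_sum fun k _ => ?_
    linarith [mul_le_mul_of_nonneg_left (lo hg₁ hLp₁ k) (hC0 i k)]
  have Tup : ∑ k, d k * g₂ (x k) ≤ b₂ * ∑ k, d k * g₂ (y k) := by
    rw [Finset.mul_sum]
    refine Finset.sum_le_sum fun k _ => ?_
    linarith [mul_le_mul_of_nonneg_left (up hg₂ hLp₂ k) (hd k).le]
  have Tlo : a₂ * ∑ k, d k * g₂ (y k) ≤ ∑ k, d k * g₂ (x k) := by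
    rw [Finset.mul_sum]
    refine Finset.sum_le_sum fun k _ => ?_
    linarith [mul_le_mul_of_nonneg_left (lo hg₂ hLp₂ k) (hd k).le]
  have pγ : 0 < 1 - γ := by linarith
  have hmlo : ∀ i j, (a₁ * a₂) * mD C d γ g₁ g₂ y i j ≤ mD C d γ g₁ g₂ x i j := by
    intro i j
    simp only [mD, Matrix.of_apply]
    have h1 := mul_le_mul (lo hg₁ hLp₁ j) Tlo (mul_pos pa₂ (hT y hg2y)).le (hg1x j).le
    have h2 := mul_le_mul (lo hg₂ hLp₂ j) (Slo i) (mul_pos pa₁ (hS y hg1y i)).le (hg2x j).le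
    have h3 := mul_le_mul_of_nonneg_left h1 (mul_nonneg hγ0.le (hC0 i j))
    have h4 := mul_le_mul_of_nonneg_left h2 (mul_nonneg pγ.le (hd j).le)
    linarith
  have hmup : ∀ i j, mD C d γ g₁ g₂ x i j ≤ (b₁ * b₂) * mD C d γ g₁ g₂ y i j := by
    intro i j
    simp only [mD, Matrix.of_apply]
    have h1 := mul_le_mul (up hg₁ hLp₁ j) Tup (hT x hg2x).le (mul_pos pb₁ (hg1y j)).le
    have h2 := mul_le_mul (up hg₂ hLp₂ j) (Sup i) (hS x hg1x i).le (mul_pos pb₂ (hg2y j)).le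
    have h3 := mul_le_mul_of_nonneg_left h1 (mul_nonneg hγ0.le (hC0 i j))
    have h4 := mul_le_mul_of_nonneg_left h2 (mul_nonneg pγ.le (hd j).le)
    linarith
  have hcmp := stat_compare hn _ _ (hmpos y hg1y hg2y) (hmpos x hg1x hg2x) _ _
    (fun i => div_pos (huy i) (hS y hg1y i))
    (stat_mD C d γ g₁ g₂ y uy (hT y hg2y) (hS y hg1y) huy')
    (fun i => div_pos (hux i) (hS x hg1x i))
    (stat_mD C d γ g₁ g₂ x ux (hT x hg2x) (hS x hg1x) hux')
    (a₁ * a₂) (b₁ * b₂) (mul_pos pa₁ pa₂) (mul_pos pb₁ pb₂) hmlo hmup i j hij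
  have SX := hS x hg1x
  have SY := hS y hg1y
  have l1 := Real.log_le_log (SX i) (Sup i)
  have l2 := Real.log_le_log (mul_pos pa₁ (SY j)) (Slo j)
  rw [Real.log_mul pb₁.ne' (SY i).ne', hb₁, Real.log_exp] at l1
  rw [Real.log_mul pa₁.ne' (SY j).ne', ha₁, Real.log_exp] at l2
  have l3 := Real.log_le_log
    (mul_pos (pow_pos (mul_pos pa₁ pa₂) _)
      (mul_pos (div_pos (hux i) (SX i)) (div_pos (huy j) (SY j)))) hcmp
  rw [Real.log_mul (pow_pos (mul_pos pa₁ pa₂) _).ne'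
      (mul_pos (div_pos (hux i) (SX i)) (div_pos (huy j) (SY j))).ne',
    Real.log_mul (pow_pos (mul_pos pb₁ pb₂) _).ne'
      (mul_pos (div_pos (huy i) (SY i)) (div_pos (hux j) (SX j))).ne',
    Real.log_pow, Real.log_pow, Real.log_mul pa₁.ne' pa₂.ne', Real.log_mul pb₁.ne' pb₂.ne',
    Real.log_mul (div_pos (hux i) (SX i)).ne' (div_pos (huy j) (SY j)).ne',
    Real.log_mul (div_pos (huy i) (SY i)).ne' (div_pos (hux j) (SX j)).ne',
    Real.log_div (hux i).ne' (SX i).ne', Real.log_div (huy j).ne' (SY j).ne',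
    Real.log_div (huy i).ne' (SY i).ne', Real.log_div (hux j).ne' (SX j).ne',
    ha₁, ha₂, hb₁, hb₂, Real.log_exp, Real.log_exp, Real.log_exp, Real.log_exp,
    Nat.cast_sub (by omega : 1 ≤ n), Nat.cast_one] at l3
  have hVv : 0 ≤ κ * (V - v) := mul_nonneg hκ0 (by linarith)
  have l4 := mul_le_mul_of_nonneg_left hsmall hVv
  linarith

/-- The Hilbert projective distance of `x`, `y` is at most `δ`. -/
def OscLe {n : ℕ} (δ : ℝ) (x y : Fin n → ℝ) : Prop :=
  ∀ i j, Real.log (x i) - Real.log (y i) - (Real.log (x j) - Real.log (y j)) ≤ δ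

lemma exists_le_of_simplex {n : ℕ} (hn : 0 < n) {x y : Fin n → ℝ}
    (hx : x ∈ stdSimplex ℝ (Fin n)) (hy : y ∈ stdSimplex ℝ (Fin n)) : ∃ i, x i ≤ y i := by
  by_contra h
  push Not at h
  have : Nonempty (Fin n) := ⟨⟨0, hn⟩⟩
  have := Finset.sum_lt_sum_of_nonempty (s := (Finset.univ : Finset (Fin n)))
    Finset.univ_nonempty (fun i _ => h i)
  rw [hx.2, hy.2] at this
  exact lt_irrefl _ this

lemma osc_abs {n : ℕ} (hn : 0 < n) {x y : Fin n → ℝ} {δ : ℝ}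
    (hx : x ∈ stdSimplex ℝ (Fin n)) (hy : y ∈ stdSimplex ℝ (Fin n))
    (hxp : ∀ i, 0 < x i) (hyp : ∀ i, 0 < y i) (h : OscLe δ x y) (i : Fin n) :
    |Real.log (x i) - Real.log (y i)| ≤ δ := by
  obtain ⟨a, ha⟩ := exists_le_of_simplex hn hx hy
  obtain ⟨b, hb⟩ := exists_le_of_simplex hn hy hx
  have ha' := Real.log_le_log (hxp a) ha
  have hb' := Real.log_le_log (hyp b) hb
  rw [abs_le]
  constructor
  · linarith [h b i]
  · linarith [h i a]

lemma osc_dist {n : ℕ} (hn : 0 < n) {x y : Fin n → ℝ} {δ : ℝ}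
    (hx : x ∈ stdSimplex ℝ (Fin n)) (hy : y ∈ stdSimplex ℝ (Fin n))
    (hxp : ∀ i, 0 < x i) (hyp : ∀ i, 0 < y i) (h : OscLe δ x y) : dist x y ≤ δ := by
  have habs := osc_abs hn hx hy hxp hyp h
  have hδ : 0 ≤ δ := (abs_nonneg _).trans (habs ⟨0, hn⟩)
  have hle1 : ∀ z ∈ stdSimplex ℝ (Fin n), ∀ i, z i ≤ 1 := by
    intro z hz i
    rw [← hz.2]
    exact Finset.single_le_sum (fun j _ => hz.1 j) (Finset.mem_univ i)
  rw [dist_pi_le_iff hδ]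
  intro i
  rw [Real.dist_eq]
  have hi := abs_le.mp (habs i)
  rcases le_total (y i) (x i) with hh | hh
  · rw [abs_of_nonneg (by linarith)]
    linarith [log_slope (hyp i) hh (hle1 x hx i)]
  · rw [abs_of_nonpos (by linarith)]
    linarith [log_slope (hxp i) hh (hle1 y hy i)]

theorem damped_u_unique_fixed_point_and_convergence
    (n : ℕ) (hn : 0 < n) (C : Matrix (Fin n) (Fin n) ℝ)
    (hC0 : ∀ i j, 0 ≤ C i j) (hrow : ∀ i, ∃ j, 0 < C i j)
    (d : Fin n → ℝ) (hd : ∀ i, 0 < d i)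
    (γ : ℝ) (hγ0 : 0 < γ) (hγ1 : γ < 1)
    (g₁ g₁' g₂ g₂' : ℝ → ℝ) (hg₁ : IsWeight g₁ g₁') (hg₂ : IsWeight g₂ g₂')
    (Lp₁ Lp₂ : ℝ) (hLp₁ : IsGreatest (ratioSet g₁ g₁') Lp₁)
    (hLp₂ : IsGreatest (ratioSet g₂ g₂') Lp₂)
    (hsmall : (n : ℝ) * Lp₁ + ((n : ℝ) - 1) * Lp₂ ≤ 1)
    (u : (Fin n → ℝ) → (Fin n → ℝ))
    (hu : ∀ x ∈ stdSimplex ℝ (Fin n), u x ∈ stdSimplex ℝ (Fin n) ∧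
      Matrix.vecMul (u x) (Md C d γ g₁ g₂ x) = u x ∧
      ∀ v ∈ stdSimplex ℝ (Fin n), Matrix.vecMul v (Md C d γ g₁ g₂ x) = v → v = u x) :
    ∃ xs ∈ stdSimplex ℝ (Fin n), (∀ i, 0 < xs i) ∧ u xs = xs ∧
      (∀ y ∈ stdSimplex ℝ (Fin n), u y = y → y = xs) ∧
      ∀ x ∈ stdSimplex ℝ (Fin n),
        Tendsto (fun s : ℕ => u^[s] x) atTop (𝓝 xs) := by

  have hne : Nonempty (Fin n) := ⟨⟨0, hn⟩⟩
  have hle1 : ∀ z ∈ stdSimplex ℝ (Fin n), ∀ i, z i ≤ 1 := by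
    intro z hz i
    rw [← hz.2]
    exact Finset.single_le_sum (fun j _ => hz.1 j) (Finset.mem_univ i)
  -- lower bound on the image of `u`
  have h11 : (1:ℝ) ∈ Set.Icc (0:ℝ) 1 := by simp
  have h01 : (0:ℝ) ∈ Set.Icc (0:ℝ) 1 := by simp
  have hg1pos : 0 < g₂ 1 := hg₂.2.2.2.1 1 h11
  set D : ℝ := ∑ k, d k * g₂ 1 with hD
  have hDpos : 0 < D := Finset.sum_pos (fun k _ => mul_pos (hd k) hg1pos) Finset.univ_nonempty
  obtain ⟨i₀, -, hi₀⟩ := (Finset.univ : Finset (Fin n)).exists_min_image d Finset.univ_nonempty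
  have pγ : 0 < 1 - γ := by linarith
  have hlow : ∀ x ∈ stdSimplex ℝ (Fin n), ∀ i, (1 - γ) * (d i₀ / D) ≤ u x i := by
    intro x hx i
    obtain ⟨hux, hinv, -⟩ := hu x hx
    have hxI : ∀ k, x k ∈ Set.Icc (0:ℝ) 1 := fun k => ⟨hx.1 k, hle1 x hx k⟩
    have hT : ∑ k, d k * g₂ (x k) ≤ D := Finset.sum_le_sum fun k _ =>
      mul_le_mul_of_nonneg_left (weight_mono hg₂ (hxI k) h11 (hxI k).2) (hd k).le
    have hT0 : 0 < ∑ k, d k * g₂ (x k) := Finset.sum_pos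
      (fun k _ => mul_pos (hd k) (hg₂.2.2.2.1 _ (hxI k))) Finset.univ_nonempty
    have hg2 : 1 ≤ g₂ (x i) := by
      have := weight_mono hg₂ h01 (hxI i) (hxI i).1
      rwa [hg₂.2.2.1] at this
    have hentry : ∀ k, (1 - γ) * (d i₀ / D) ≤ Md C d γ g₁ g₂ x k i := by
      intro k
      simp only [Md, Matrix.of_apply]
      have h1 : 0 ≤ C k i * g₁ (x i) / ∑ l, C k l * g₁ (x l) :=
        div_nonneg (mul_nonneg (hC0 k i) (hg₁.2.2.2.1 _ (hxI i)).le)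
          (Finset.sum_nonneg fun l _ => mul_nonneg (hC0 k l) (hg₁.2.2.2.1 _ (hxI l)).le)
      have h2 : d i₀ / D ≤ d i * g₂ (x i) / ∑ l, d l * g₂ (x l) := by
        apply div_le_div₀ _ _ hT0 hT
        · exact mul_nonneg (hd i).le (by linarith)
        · have := hi₀ i (Finset.mem_univ i)
          nlinarith [hd i]
      have h3 := mul_le_mul_of_nonneg_left h2 pγ.le
      have h4 := mul_nonneg hγ0.le h1
      linarith
    have h5 := congrFun hinv i
    simp only [Matrix.vecMul, dotProduct] at h5
    rw [← h5]
    calc (1 - γ) * (d i₀ / D) = ∑ k, u x k * ((1 - γ) * (d i₀ / D)) := by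
          rw [← Finset.sum_mul, hux.2, one_mul]
      _ ≤ _ := Finset.sum_le_sum fun k _ => mul_le_mul_of_nonneg_left (hentry k) (hux.1 k)
  obtain ⟨ε, hε0, hε1, hlowε⟩ : ∃ ε : ℝ, 0 < ε ∧ ε ≤ 1 / 2 ∧
      ∀ x ∈ stdSimplex ℝ (Fin n), ∀ i, ε ≤ u x i := by
    refine ⟨min ((1 - γ) * (d i₀ / D)) (1 / 2), ?_, min_le_right _ _, fun x hx i =>
      (min_le_left _ _).trans (hlow x hx i)⟩
    have := hd i₀
    positivity
  set κ : ℝ := 1 - ε with hκ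
  have hκ0 : 0 ≤ κ := by linarith
  have hκ1 : κ < 1 := by linarith
  -- the invariant region
  set K : Set (Fin n → ℝ) := {x | x ∈ stdSimplex ℝ (Fin n) ∧ ∀ i, ε ≤ x i} with hK
  have huK : ∀ x ∈ stdSimplex ℝ (Fin n), u x ∈ K := fun x hx => ⟨(hu x hx).1, hlowε x hx⟩
  have hKp : ∀ x ∈ K, ∀ i, 0 < x i := fun x hx i => hε0.trans_le (hx.2 i)
  have hcontr : ∀ x ∈ K, ∀ y ∈ K, ∀ δ, OscLe δ x y → OscLe (κ * δ) (u x) (u y) := by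
    intro x hx y hy δ h i j
    have hxp := hKp x hx
    have hyp := hKp y hy
    by_cases hij : i = j
    · subst hij
      have : 0 ≤ δ := (abs_nonneg _).trans (osc_abs hn hx.1 hy.1 hxp hyp h i)
      have : 0 ≤ κ * δ := by positivity
      linarith
    have hup : ∀ z ∈ K, ∀ l, z l ≤ κ := by
      intro z hz l
      obtain ⟨l', hl'⟩ : ∃ l', l' ≠ l := by
        by_cases h : i = l
        · exact ⟨j, fun h' => hij (h.trans h'.symm)⟩
        · exact ⟨i, h⟩
      have h1 : z l + z l' ≤ ∑ k, z k := by
        rw [← Finset.sum_pair hl'.symm]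
        exact Finset.sum_le_sum_of_subset_of_nonneg (Finset.subset_univ _)
          (fun k _ _ => hz.1.1 k)
      rw [hz.1.2] at h1
      linarith [hz.2 l']
    obtain ⟨a, -, ha⟩ := (Finset.univ : Finset (Fin n)).exists_min_image
      (fun i => Real.log (x i) - Real.log (y i)) Finset.univ_nonempty
    obtain ⟨b, -, hb⟩ := (Finset.univ : Finset (Fin n)).exists_max_image
      (fun i => Real.log (x i) - Real.log (y i)) Finset.univ_nonempty
    obtain ⟨a', ha'⟩ := exists_le_of_simplex hn hx.1 hy.1
    obtain ⟨b', hb'⟩ := exists_le_of_simplex hn hy.1 hx.1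
    have hla := Real.log_le_log (hxp a') ha'
    have hlb := Real.log_le_log (hyp b') hb'
    have := contraction hn C hC0 hrow d hd γ hγ0 hγ1 g₁ g₁' g₂ g₂' hg₁ hg₂ Lp₁ Lp₂ hLp₁ hLp₂
      hsmall x y (u x) (u y) κ _ _ hκ1.le hκ0 hxp hyp (hup x hx) (hup y hy)
      (by linarith [ha a' (Finset.mem_univ _)]) (by linarith [hb b' (Finset.mem_univ _)])
      (fun i => ha i (Finset.mem_univ _)) (fun i => hb i (Finset.mem_univ _))
      (hKp _ (huK x hx.1)) (hKp _ (huK y hy.1)) (hu x hx.1).2.1 (hu y hy.1).2.1 i j hij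
    exact this.trans (mul_le_mul_of_nonneg_left (h b a) hκ0)
  have hitK : ∀ x ∈ K, ∀ s : ℕ, u^[s] x ∈ K := by
    intro x hx s
    induction s with
    | zero => exact hx
    | succ s ih => rw [Function.iterate_succ_apply']; exact huK _ ih.1
  have hiter : ∀ x ∈ K, ∀ y ∈ K, ∀ δ, OscLe δ x y →
      ∀ s : ℕ, OscLe (δ * κ ^ s) (u^[s] x) (u^[s] y) := by
    intro x hx y hy δ h s
    induction s with
    | zero => simpa using h
    | succ s ih =>
      rw [Function.iterate_succ_apply', Function.iterate_succ_apply']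
      have := hcontr _ (hitK x hx s) _ (hitK y hy s) _ ih
      rwa [show δ * κ ^ (s + 1) = κ * (δ * κ ^ s) by ring]
  have hex : ∀ x y : Fin n → ℝ, ∃ δ, OscLe δ x y := by
    intro x y
    obtain ⟨b, hb⟩ := Finite.exists_max (fun q : Fin n × Fin n =>
      Real.log (x q.1) - Real.log (y q.1) - (Real.log (x q.2) - Real.log (y q.2)))
    exact ⟨_, fun i j => hb (i, j)⟩
  have hdist : ∀ x ∈ K, ∀ y ∈ K, ∀ δ, OscLe δ x y → dist x y ≤ δ := fun x hx y hy δ h =>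
    osc_dist hn hx.1 hy.1 (hKp x hx) (hKp y hy) h
  have hKclosed : IsClosed K := by
    have h1 : IsClosed (stdSimplex ℝ (Fin n)) := isClosed_stdSimplex _ _
    have h2 : IsClosed {x : Fin n → ℝ | ∀ i, ε ≤ x i} := by
      simp only [Set.ofPred_forall]
      exact isClosed_iInter fun i => isClosed_le continuous_const (continuous_apply i)
    exact h1.inter h2
  -- existence
  have hx0 : (Pi.single (⟨0, hn⟩ : Fin n) (1:ℝ)) ∈ stdSimplex ℝ (Fin n) :=
    single_mem_stdSimplex ℝ _
  set z : Fin n → ℝ := u (Pi.single (⟨0, hn⟩ : Fin n) (1:ℝ)) with hz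
  have hzK : z ∈ K := huK _ hx0
  obtain ⟨δ₀, hδ₀⟩ := hex z (u z)
  have hcau : CauchySeq (fun s : ℕ => u^[s] z) := by
    refine cauchySeq_of_le_geometric κ δ₀ hκ1 fun s => ?_
    have := hdist _ (hitK z hzK s) _ (hitK _ (huK z hzK.1) s) _
      (hiter z hzK (u z) (huK z hzK.1) δ₀ hδ₀ s)
    rwa [← Function.iterate_succ_apply] at this
  obtain ⟨xs, hxs⟩ := cauchySeq_tendsto_of_complete hcau
  have hxsK : xs ∈ K := hKclosed.mem_of_tendsto hxs (Eventually.of_forall (hitK z hzK))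
  have hlogt : ∀ i, Tendsto (fun s : ℕ => |Real.log (u^[s] z i) - Real.log (xs i)|) atTop (𝓝 0) := by
    intro i
    have h1 : Tendsto (fun s : ℕ => u^[s] z i) atTop (𝓝 (xs i)) :=
      (tendsto_pi_nhds.mp hxs) i
    have h2 := (h1.log (hKp xs hxsK i).ne').sub_const (Real.log (xs i))
    simpa using h2.abs
  have hfix : u xs = xs := by
    have hsum : Tendsto (fun s : ℕ => κ * (2 * ∑ i, |Real.log (u^[s] z i) - Real.log (xs i)|))
        atTop (𝓝 0) := by
      have := tendsto_finsetSum (Finset.univ : Finset (Fin n)) (fun i _ => hlogt i)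
      simpa using (this.const_mul 2).const_mul κ
    have hto : Tendsto (fun s : ℕ => u^[s+1] z) atTop (𝓝 (u xs)) := by
      rw [tendsto_iff_dist_tendsto_zero]
      refine squeeze_zero (fun _ => dist_nonneg) (fun s => ?_) hsum
      rw [Function.iterate_succ_apply']
      refine hdist _ (huK _ (hitK z hzK s).1) _ (huK _ hxsK.1) _
        (hcontr _ (hitK z hzK s) _ hxsK _ ?_)
      intro i j
      have hs : ∀ i, |Real.log (u^[s] z i) - Real.log (xs i)| ≤
          ∑ i, |Real.log (u^[s] z i) - Real.log (xs i)| := fun i =>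
        Finset.single_le_sum (f := fun i => |Real.log (u^[s] z i) - Real.log (xs i)|)
          (fun _ _ => abs_nonneg _) (Finset.mem_univ i)
      have h1 := (abs_le.mp (hs i)).2
      have h2 := (abs_le.mp (hs j)).1
      linarith
    exact tendsto_nhds_unique hto ((tendsto_add_atTop_iff_nat 1).mpr hxs)
  have hconv : ∀ x ∈ stdSimplex ℝ (Fin n),
      Tendsto (fun s : ℕ => u^[s] x) atTop (𝓝 xs) := by
    intro x hx
    rw [← tendsto_add_atTop_iff_nat 1, tendsto_iff_dist_tendsto_zero]
    obtain ⟨δ, hδ⟩ := hex (u x) xs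
    have hg : Tendsto (fun s : ℕ => δ * κ ^ s) atTop (𝓝 0) := by
      simpa using (tendsto_pow_atTop_nhds_zero_of_lt_one hκ0 hκ1).const_mul δ
    refine squeeze_zero (fun _ => dist_nonneg) (fun s => ?_) hg
    have := hdist _ (hitK _ (huK x hx) s) _ (hitK _ hxsK s) _
      (hiter _ (huK x hx) _ hxsK δ hδ s)
    rwa [Function.iterate_fixed hfix, ← Function.iterate_succ_apply] at this
  refine ⟨xs, hxsK.1, hKp xs hxsK, hfix, fun y hy huy => ?_, hconv⟩
  have h1 := hconv y hy
  simp only [Function.iterate_fixed huy] at h1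
  exact tendsto_nhds_unique tendsto_const_nhds h1
end

section
/- In the damped model, the fixed points of u and of f coincide: for x ∈ Σ, u(x) = x if and only if f(x) = x. Moreover, there exists ε > 0, depending only on C, d and γ, such that whenever L⁺(g₁) + L⁺(g₂) ≤ ε, the map f has a unique fixed point x* (which is also the unique fixed point of u) and for every x ∈ Σ the iterates f^s(x) converge to x* as s → ∞. -/
open Set Matrix Filter Topology

/-- The map `f(x) = x · M(x)` of the damped model. -/
noncomputable def fd {n : ℕ} (C : Matrix (Fin n) (Fin n) ℝ) (d : Fin n → ℝ)
    (γ : ℝ) (g₁ g₂ : ℝ → ℝ) (x : Fin n → ℝ) : Fin n → ℝ :=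
  Matrix.vecMul x (Md C d γ g₁ g₂ x)

lemma aux_fix {n : ℕ} (hn : 0 < n) (f : (Fin n → ℝ) → (Fin n → ℝ)) (q : ℝ) (hq0 : 0 ≤ q)
    (hq : q < 1)
    (hmap : ∀ x ∈ stdSimplex ℝ (Fin n), f x ∈ stdSimplex ℝ (Fin n))
    (hc : ∀ x ∈ stdSimplex ℝ (Fin n), ∀ y ∈ stdSimplex ℝ (Fin n),
      ∑ i, |f x i - f y i| ≤ q * ∑ i, |x i - y i|) :
    ∃ xs ∈ stdSimplex ℝ (Fin n), f xs = xs ∧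
      (∀ y ∈ stdSimplex ℝ (Fin n), f y = y → y = xs) ∧
      ∀ x ∈ stdSimplex ℝ (Fin n),
        Tendsto (fun s : ℕ => f^[s] x) atTop (𝓝 xs) := by
  have hzero : ∀ x y : Fin n → ℝ, ∑ i, |x i - y i| ≤ 0 → x = y := by
    intro x y h
    have h0 : ∑ i, |x i - y i| = 0 := le_antisymm h (Finset.sum_nonneg fun i _ => abs_nonneg _)
    rw [Finset.sum_eq_zero_iff_of_nonneg (fun i _ => abs_nonneg _)] at h0
    funext i
    have := h0 i (Finset.mem_univ i)
    rw [abs_eq_zero] at this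
    linarith
  have hcont : ContinuousOn f (stdSimplex ℝ (Fin n)) := by
    have hl : LipschitzOnWith (n : NNReal) f (stdSimplex ℝ (Fin n)) := by
      apply LipschitzOnWith.of_dist_le_mul
      intro x hx y hy
      have hb : ∑ i, |x i - y i| ≤ n * dist x y := by
        calc ∑ i, |x i - y i| ≤ ∑ _i : Fin n, dist x y := by
              apply Finset.sum_le_sum
              intro i _
              rw [← Real.dist_eq]
              exact dist_le_pi_dist x y i
          _ = n * dist x y := by simp
      have h0 : 0 ≤ ∑ i, |x i - y i| := Finset.sum_nonneg fun i _ => abs_nonneg _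
      have h1 := hc x hx y hy
      simp only [NNReal.coe_natCast]
      rw [dist_pi_le_iff (by positivity)]
      intro i
      rw [Real.dist_eq]
      have h2 : |f x i - f y i| ≤ ∑ i, |f x i - f y i| :=
        Finset.single_le_sum (f := fun i => |f x i - f y i|)
          (fun i _ => abs_nonneg _) (Finset.mem_univ i)
      nlinarith
    exact hl.continuousOn
  have hne : (stdSimplex ℝ (Fin n)).Nonempty :=
    ⟨Pi.single ⟨0, hn⟩ 1, single_mem_stdSimplex ℝ _⟩
  have hΦ : ContinuousOn (fun x => ∑ i, |f x i - x i|) (stdSimplex ℝ (Fin n)) := by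
    apply continuousOn_finset_sum
    intro i _
    apply ContinuousOn.abs
    apply ContinuousOn.sub
    · exact (continuous_apply i).comp_continuousOn hcont
    · exact (continuous_apply i).continuousOn
  obtain ⟨xs, hxs, hmin⟩ := (isCompact_stdSimplex ℝ (Fin n)).exists_isMinOn hne hΦ
  have hfix : f xs = xs := by
    apply hzero
    have h1 : ∑ i, |f xs i - xs i| ≤ ∑ i, |f (f xs) i - f xs i| := hmin (hmap xs hxs)
    have h2 := hc (f xs) (hmap xs hxs) xs hxs
    nlinarith
  refine ⟨xs, hxs, hfix, ?_, ?_⟩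
  · intro y hy hfy
    apply hzero
    have h2 := hc y hy xs hxs
    rw [hfy, hfix] at h2
    nlinarith
  · intro x hx
    have key : ∀ s : ℕ, f^[s] x ∈ stdSimplex ℝ (Fin n) ∧
        ∑ i, |f^[s] x i - xs i| ≤ q ^ s * ∑ i, |x i - xs i| := by
      intro s
      induction s with
      | zero => simpa using hx
      | succ k ih =>
        rw [Function.iterate_succ_apply']
        refine ⟨hmap _ ih.1, ?_⟩
        have h2 := hc _ ih.1 xs hxs
        rw [hfix] at h2
        calc _ ≤ _ := h2
          _ ≤ q * (q ^ k * ∑ i, |x i - xs i|) := mul_le_mul_of_nonneg_left ih.2 hq0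
          _ = _ := by ring
    have hlim : Tendsto (fun s : ℕ => q ^ s * ∑ i, |x i - xs i|) atTop (𝓝 0) := by
      have := (tendsto_pow_atTop_nhds_zero_of_lt_one hq0 hq).mul_const (∑ i, |x i - xs i|)
      simpa using this
    rw [tendsto_pi_nhds]
    intro i
    rw [tendsto_iff_dist_tendsto_zero]
    refine squeeze_zero (fun _ => dist_nonneg) (fun s => ?_) hlim
    rw [Real.dist_eq]
    exact (Finset.single_le_sum (f := fun i => |f^[s] x i - xs i|)
          (fun i _ => abs_nonneg _) (Finset.mem_univ i)).trans (key s).2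

/-- Weight bounds. -/
lemma aux_weight {g g' : ℝ → ℝ} {L : ℝ} (hg : IsWeight g g') (hL : IsGreatest (ratioSet g g') L) :
    0 ≤ L ∧ (∀ x ∈ Set.Icc (0:ℝ) 1, 1 ≤ g x) ∧ (L ≤ 1/2 →
      ∀ x ∈ Set.Icc (0:ℝ) 1, ∀ y ∈ Set.Icc (0:ℝ) 1, |g x - g y| ≤ 2 * L * |x - y|) := by
  obtain ⟨hd, hc, h0, hpos, hor⟩ := hg
  have hnn : ∀ x ∈ Set.Icc (0:ℝ) 1, 0 ≤ g' x := by
    intro x hx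
    rcases hor with h | h
    · exact (h x hx).le
    · exact (h.2 x hx).ge
  have z : (0:ℝ) ∈ Set.Icc (0:ℝ) 1 := by simp
  have hcg : ContinuousOn g (Set.Icc (0:ℝ) 1) := fun x hx => (hd x hx).continuousWithinAt
  have hL0 : 0 ≤ L := by
    obtain ⟨x, hx, rfl⟩ := hL.1
    exact div_nonneg (hnn x hx) (hpos x hx).le
  have hub : ∀ x ∈ Set.Icc (0:ℝ) 1, g' x ≤ L * g x := by
    intro x hx
    have := hL.2 ⟨x, hx, rfl⟩
    exact (div_le_iff₀ (hpos x hx)).1 this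
  have hmono : MonotoneOn g (Set.Icc (0:ℝ) 1) := by
    apply monotoneOn_of_hasDerivWithinAt_nonneg (f' := g') (convex_Icc 0 1) hcg
    · intro x hx
      exact (hd x (interior_subset hx)).mono interior_subset
    · intro x hx
      exact hnn x (interior_subset hx)
  refine ⟨hL0, fun x hx => h0 ▸ hmono z hx hx.1, ?_⟩
  intro hL2
  have o : (1:ℝ) ∈ Set.Icc (0:ℝ) 1 := by simp
  have hlip : ∀ x ∈ Set.Icc (0:ℝ) 1, ∀ y ∈ Set.Icc (0:ℝ) 1,
      |g x - g y| ≤ (L * g 1) * |x - y| := by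
    intro x hx y hy
    have := Convex.norm_image_sub_le_of_norm_hasDerivWithin_le (C := L * g 1) hd
      (fun t ht => by
        rw [Real.norm_eq_abs, abs_of_nonneg (hnn t ht)]
        exact (hub t ht).trans (mul_le_mul_of_nonneg_left (hmono ht o ht.2) hL0))
      (convex_Icc 0 1) hy hx
    simpa [Real.norm_eq_abs] using this
  have h1 : g 1 ≤ 2 := by
    have := hlip 1 o 0 z
    rw [h0] at this
    have h3 := le_abs_self (g 1 - 1)
    have h4 := hpos 1 o
    norm_num at this
    nlinarith
  intro x hx y hy
  refine (hlip x hx y hy).trans ?_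
  apply mul_le_mul_of_nonneg_right _ (abs_nonneg _)
  nlinarith

/-- Normalised weighted rows are Lipschitz in l1. -/
lemma aux_row {n : ℕ} (c : Fin n → ℝ) (hc : ∀ i, 0 ≤ c i) (hc' : ∃ j, 0 < c j)
    (p r : Fin n → ℝ) (K : ℝ) (hK : 0 ≤ K) (δ : Fin n → ℝ) (hp : ∀ i, 1 ≤ p i) (hr : ∀ i, 1 ≤ r i)
    (hδ : ∀ i, |p i - r i| ≤ K * δ i) :
    ∑ j, |c j * p j / (∑ k, c k * p k) - c j * r j / (∑ k, c k * r k)| ≤ 2 * K * ∑ j, δ j := by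
  have hS : 0 < ∑ k, c k := by
    obtain ⟨j, hj⟩ := hc'
    exact Finset.sum_pos' (fun i _ => hc i) ⟨j, Finset.mem_univ j, hj⟩
  have hge : ∀ p : Fin n → ℝ, (∀ i, 1 ≤ p i) → ∑ k, c k ≤ ∑ k, c k * p k := by
    intro p hp
    exact Finset.sum_le_sum fun i _ => le_mul_of_one_le_right (hc i) (hp i)
  have hA := hge p hp
  have hB := hge r hr
  set A := ∑ k, c k * p k with hAd
  set B := ∑ k, c k * r k with hBd
  set S := ∑ k, c k with hSd
  have hA0 : 0 < A := hS.trans_le hA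
  have hB0 : 0 < B := hS.trans_le hB
  set D := ∑ j, c j * |p j - r j| with hD
  have hAB : |A - B| ≤ D := by
    rw [hAd, hBd, ← Finset.sum_sub_distrib]
    refine (Finset.abs_sum_le_sum_abs _ _).trans (Finset.sum_le_sum fun i _ => ?_)
    rw [← mul_sub, abs_mul, abs_of_nonneg (hc i)]
  have hterm : ∀ j, |c j * p j / A - c j * r j / B| ≤
      c j * |p j - r j| / A + c j * r j * (|A - B| / (A * B)) := by
    intro j
    have : c j * p j / A - c j * r j / B =
      c j * (p j - r j) / A + c j * r j * (-((A - B) / (A * B))) := by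
      field_simp
      ring
    rw [this]
    refine (abs_add_le _ _).trans (le_of_eq ?_)
    have hrj : 0 ≤ r j := by linarith [hr j]
    rw [abs_div, abs_mul, abs_mul, abs_mul, abs_neg, abs_div, abs_of_pos hA0, abs_of_nonneg (hc j),
      abs_of_nonneg hrj, abs_of_pos (mul_pos hA0 hB0)]
  have hδ0 : 0 ≤ K * ∑ j, δ j := by
    rw [Finset.mul_sum]
    exact Finset.sum_nonneg fun i _ => (abs_nonneg _).trans (hδ i)
  have hDle : D ≤ S * (K * ∑ j, δ j) := by
    rw [hD, Finset.mul_sum, Finset.mul_sum]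
    refine Finset.sum_le_sum fun i _ => ?_
    have h1 : c i ≤ S := Finset.single_le_sum (fun i _ => hc i) (Finset.mem_univ i)
    exact mul_le_mul h1 (hδ i) (abs_nonneg _) hS.le
  have hDA : D / A ≤ K * ∑ j, δ j := by
    rw [div_le_iff₀ hA0]
    nlinarith
  calc _ ≤ ∑ j, (c j * |p j - r j| / A + c j * r j * (|A - B| / (A * B))) :=
        Finset.sum_le_sum fun j _ => hterm j
    _ = D / A + B * (|A - B| / (A * B)) := by
        rw [Finset.sum_add_distrib, ← Finset.sum_div, ← Finset.sum_mul]
    _ = D / A + |A - B| / A := by field_simp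
    _ ≤ D / A + D / A := by gcongr
    _ ≤ _ := by linarith

lemma aux_row_sum {n : ℕ} (c : Fin n → ℝ) (hc : ∀ i, 0 ≤ c i) (hc' : ∃ j, 0 < c j)
    (p : Fin n → ℝ) (hp : ∀ i, 1 ≤ p i) :
    (∀ j, 0 ≤ c j * p j / (∑ k, c k * p k)) ∧ ∑ j, c j * p j / (∑ k, c k * p k) = 1 := by
  have hnn : ∀ i, 0 ≤ c i * p i := fun i => mul_nonneg (hc i) (by linarith [hp i])
  have hS : 0 < ∑ k, c k * p k := by
    obtain ⟨j, hj⟩ := hc'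
    exact Finset.sum_pos' (fun i _ => hnn i)
      ⟨j, Finset.mem_univ j, mul_pos hj (by linarith [hp j])⟩
  refine ⟨fun j => div_nonneg (hnn j) hS.le, ?_⟩
  rw [← Finset.sum_div, div_self hS.ne']

/-- Abstract l1 estimate. -/
lemma aux_l1 {n : ℕ} (x y : Fin n → ℝ) (hx : x ∈ stdSimplex ℝ (Fin n))
    (hy : y ∈ stdSimplex ℝ (Fin n)) (P Q : Fin n → Fin n → ℝ) (v w : Fin n → ℝ) (γ a b : ℝ)
    (hγ0 : 0 < γ) (hγ1 : γ < 1)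
    (hP : ∀ i j, 0 ≤ P i j) (hP1 : ∀ i, ∑ j, P i j = 1)
    (hPQ : ∀ i, ∑ j, |P i j - Q i j| ≤ a) (hvw : ∑ j, |v j - w j| ≤ b) :
    ∑ j, |(∑ i, x i * (γ * P i j + (1 - γ) * v j)) - (∑ i, y i * (γ * Q i j + (1 - γ) * w j))| ≤
      γ * ∑ i, |x i - y i| + γ * a + (1 - γ) * b := by
  have e : ∀ (z : Fin n → ℝ), z ∈ stdSimplex ℝ (Fin n) → ∀ (P : Fin n → Fin n → ℝ)
      (v : Fin n → ℝ) j, (∑ i, z i * (γ * P i j + (1 - γ) * v j)) =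
      γ * ∑ i, z i * P i j + (1 - γ) * v j := by
    intro z hz P v j
    have : ∀ i, z i * (γ * P i j + (1 - γ) * v j) =
      γ * (z i * P i j) + z i * ((1 - γ) * v j) := fun i => by ring
    simp only [this]
    rw [Finset.sum_add_distrib, ← Finset.mul_sum, ← Finset.sum_mul, hz.2, one_mul]
  have hterm : ∀ j, |(∑ i, x i * (γ * P i j + (1 - γ) * v j)) -
      (∑ i, y i * (γ * Q i j + (1 - γ) * w j))| ≤
      γ * ∑ i, |x i - y i| * P i j + γ * ∑ i, y i * |P i j - Q i j| + (1 - γ) * |v j - w j| := by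
    intro j
    rw [e x hx, e y hy]
    have h : γ * ∑ i, x i * P i j + (1 - γ) * v j - (γ * ∑ i, y i * Q i j + (1 - γ) * w j) =
      γ * ∑ i, (x i - y i) * P i j + γ * ∑ i, y i * (P i j - Q i j) + (1 - γ) * (v j - w j) := by
      simp only [sub_mul, mul_sub, Finset.sum_sub_distrib]
      ring
    rw [h]
    refine (abs_add_le _ _).trans (add_le_add ((abs_add_le _ _).trans (add_le_add ?_ ?_)) ?_)
    · rw [abs_mul, abs_of_pos hγ0]
      refine mul_le_mul_of_nonneg_left ((Finset.abs_sum_le_sum_abs _ _).trans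
        (le_of_eq (Finset.sum_congr rfl fun i _ => ?_))) hγ0.le
      rw [abs_mul, abs_of_nonneg (hP i j)]
    · rw [abs_mul, abs_of_pos hγ0]
      refine mul_le_mul_of_nonneg_left ((Finset.abs_sum_le_sum_abs _ _).trans
        (le_of_eq (Finset.sum_congr rfl fun i _ => ?_))) hγ0.le
      rw [abs_mul, abs_of_nonneg (hy.1 i)]
    · rw [abs_mul, abs_of_pos (by linarith)]
  refine (Finset.sum_le_sum fun j _ => hterm j).trans ?_
  rw [Finset.sum_add_distrib, Finset.sum_add_distrib, ← Finset.mul_sum, ← Finset.mul_sum,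
    ← Finset.mul_sum, Finset.sum_comm, Finset.sum_comm (f := fun j i => y i * |P i j - Q i j|)]
  simp only [← Finset.mul_sum, hP1, mul_one]
  have h1 : ∑ i, y i * ∑ j, |P i j - Q i j| ≤ a := by
    calc _ ≤ ∑ i, y i * a :=
          Finset.sum_le_sum fun i _ => mul_le_mul_of_nonneg_left (hPQ i) (hy.1 i)
      _ = a := by rw [← Finset.sum_mul, hy.2, one_mul]
  have h2 := mul_le_mul_of_nonneg_left h1 hγ0.le
  have h3 := mul_le_mul_of_nonneg_left hvw (by linarith : 0 ≤ 1 - γ)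
  linarith

theorem damped_fd_fixed_points_and_convergence
    (n : ℕ) (hn : 0 < n) (C : Matrix (Fin n) (Fin n) ℝ)
    (hC0 : ∀ i j, 0 ≤ C i j) (hrow : ∀ i, ∃ j, 0 < C i j)
    (d : Fin n → ℝ) (hd : ∀ i, 0 < d i)
    (γ : ℝ) (hγ0 : 0 < γ) (hγ1 : γ < 1) :
    (∀ g₁ g₁' g₂ g₂' : ℝ → ℝ, IsWeight g₁ g₁' → IsWeight g₂ g₂' →
      ∀ u : (Fin n → ℝ) → (Fin n → ℝ),
        (∀ x ∈ stdSimplex ℝ (Fin n), u x ∈ stdSimplex ℝ (Fin n) ∧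
          Matrix.vecMul (u x) (Md C d γ g₁ g₂ x) = u x ∧
          ∀ v ∈ stdSimplex ℝ (Fin n),
            Matrix.vecMul v (Md C d γ g₁ g₂ x) = v → v = u x) →
        ∀ x ∈ stdSimplex ℝ (Fin n), (u x = x ↔ fd C d γ g₁ g₂ x = x)) ∧
    (∃ ε : ℝ, 0 < ε ∧
      ∀ g₁ g₁' g₂ g₂' : ℝ → ℝ, ∀ Lp₁ Lp₂ : ℝ,
        IsWeight g₁ g₁' → IsWeight g₂ g₂' →
        IsGreatest (ratioSet g₁ g₁') Lp₁ → IsGreatest (ratioSet g₂ g₂') Lp₂ →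
        Lp₁ + Lp₂ ≤ ε →
        ∃ xs ∈ stdSimplex ℝ (Fin n), fd C d γ g₁ g₂ xs = xs ∧
          (∀ y ∈ stdSimplex ℝ (Fin n), fd C d γ g₁ g₂ y = y → y = xs) ∧
          ∀ x ∈ stdSimplex ℝ (Fin n),
            Tendsto (fun s : ℕ => (fd C d γ g₁ g₂)^[s] x) atTop (𝓝 xs)) := by
  constructor
  · intro g₁ g₁' g₂ g₂' _ _ u hu x hx
    obtain ⟨_, h2, h3⟩ := hu x hx
    constructor
    · intro h
      rw [h] at h2
      exact h2
    · intro h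
      exact (h3 x hx h).symm
  · refine ⟨(1 - γ) / 8, by linarith, ?_⟩
    intro g₁ g₁' g₂ g₂' L₁ L₂ hg₁ hg₂ hL₁ hL₂ hle
    obtain ⟨p₁, o₁, l₁⟩ := aux_weight hg₁ hL₁
    obtain ⟨p₂, o₂, l₂⟩ := aux_weight hg₂ hL₂
    have l₁ := l₁ (by linarith)
    have l₂ := l₂ (by linarith)
    have hI : ∀ x ∈ stdSimplex ℝ (Fin n), ∀ i, x i ∈ Set.Icc (0:ℝ) 1 := fun x hx i =>
      ⟨hx.1 i, hx.2 ▸ Finset.single_le_sum (fun i _ => hx.1 i) (Finset.mem_univ i)⟩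
    have hdn : ∃ j, 0 < d j := ⟨⟨0, hn⟩, hd _⟩
    have hd0 : ∀ i, 0 ≤ d i := fun i => (hd i).le
    have hfd : ∀ x j, fd C d γ g₁ g₂ x j =
        ∑ i, x i * (γ * (C i j * g₁ (x j) / ∑ k, C i k * g₁ (x k)) +
          (1 - γ) * (d j * g₂ (x j) / ∑ k, d k * g₂ (x k))) := by
      intro x j
      rfl
    apply aux_fix hn _ ((1 + γ) / 2) (by linarith) (by linarith)
    · intro x hx
      have r₁ := fun i => aux_row_sum (C i) (hC0 i) (hrow i) (fun j => g₁ (x j))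
        (fun j => o₁ _ (hI x hx j))
      have r₂ := aux_row_sum d hd0 hdn (fun j => g₂ (x j)) (fun j => o₂ _ (hI x hx j))
      constructor
      · intro j
        rw [hfd]
        exact Finset.sum_nonneg fun i _ => mul_nonneg (hx.1 i) (add_nonneg
          (mul_nonneg hγ0.le ((r₁ i).1 j)) (mul_nonneg (by linarith) (r₂.1 j)))
      · simp only [hfd]
        rw [Finset.sum_comm]
        simp only [← Finset.mul_sum, Finset.sum_add_distrib]
        have : ∀ i, γ * ∑ j, (C i j * g₁ (x j) / ∑ k, C i k * g₁ (x k)) +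
          (1 - γ) * ∑ j, (d j * g₂ (x j) / ∑ k, d k * g₂ (x k)) = 1 := by
          intro i
          rw [(r₁ i).2, r₂.2]
          ring
        simp only [this, mul_one]
        exact hx.2
    · intro x hx y hy
      simp only [hfd]
      have r₁ := fun i => aux_row_sum (C i) (hC0 i) (hrow i) (fun j => g₁ (x j))
        (fun j => o₁ _ (hI x hx j))
      have h := aux_l1 x y hx hy
        (fun i j => C i j * g₁ (x j) / ∑ k, C i k * g₁ (x k))
        (fun i j => C i j * g₁ (y j) / ∑ k, C i k * g₁ (y k))
        (fun j => d j * g₂ (x j) / ∑ k, d k * g₂ (x k))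
        (fun j => d j * g₂ (y j) / ∑ k, d k * g₂ (y k)) γ
        (2 * (2 * L₁) * ∑ j, |x j - y j|) (2 * (2 * L₂) * ∑ j, |x j - y j|) hγ0 hγ1
        (fun i => (r₁ i).1) (fun i => (r₁ i).2)
        (fun i => aux_row (C i) (hC0 i) (hrow i) (fun j => g₁ (x j)) (fun j => g₁ (y j))
          (2 * L₁) (by linarith) (fun j => |x j - y j|)
          (fun j => o₁ _ (hI x hx j)) (fun j => o₁ _ (hI y hy j))
          (fun j => l₁ _ (hI x hx j) _ (hI y hy j)))
        (aux_row d hd0 hdn (fun j => g₂ (x j)) (fun j => g₂ (y j))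
          (2 * L₂) (by linarith) (fun j => |x j - y j|)
          (fun j => o₂ _ (hI x hx j)) (fun j => o₂ _ (hI y hy j))
          (fun j => l₂ _ (hI x hx j) _ (hI y hy j)))
      refine h.trans ?_
      have hT : 0 ≤ ∑ j, |x j - y j| := Finset.sum_nonneg fun i _ => abs_nonneg _
      have hco : γ + γ * (2 * (2 * L₁)) + (1 - γ) * (2 * (2 * L₂)) ≤ (1 + γ) / 2 := by
        nlinarith
      have := mul_le_mul_of_nonneg_right hco hT
      linarith
end

section
/- In the damped model, assume additionally that the first column of C is positive (C_{i1} > 0 for all i) and that 1/2 < γ < 1. Then there exists δ > 0, depending only on C, d and γ, such that for every admissible weight function g₁ with L⁻(g₁) ≥ δ and every weight function g₂ (admissible or the constant 1), the map f has a fixed point x ∈ Σ with x₁ > 1/2. -/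
open Set Matrix

section BrouwerAux
open MeasureTheory Metric
open scoped NNReal ENNReal

lemma brw_det_interp {E : Type*} [NormedAddCommGroup E] [NormedSpace ℝ E] [FiniteDimensional ℝ E]
    (ε : ℝ) (hε : 0 < ε) :
    ∃ (N : ℕ) (v c : ℕ → ℝ), (∀ k, 0 < v k ∧ v k < ε) ∧ ∀ A : E →L[ℝ] E,
      (1 + A).det = ∑ k ∈ Finset.range N, c k * (1 + v k • A).det := by
  classical
  let b := Module.finBasis ℝ E
  let m := Module.finrank ℝ E
  let v : ℕ → ℝ := fun k => ε / (k + 2)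
  have hv : Function.Injective v := by
    intro i j h
    simp only [v] at h
    have hi : (i : ℝ) + 2 ≠ 0 := by positivity
    have hj : (j : ℝ) + 2 ≠ 0 := by positivity
    rw [div_eq_div_iff hi hj] at h
    have := mul_left_cancel₀ hε.ne' h
    exact_mod_cast (add_right_cancel this).symm
  refine ⟨m + 1, v, fun k => (Lagrange.basis (Finset.range (m+1)) v k).eval 1, ?_, ?_⟩
  · intro k
    refine ⟨by positivity, ?_⟩
    exact div_lt_self hε (by have : (0:ℝ) ≤ k := by positivity
                             linarith)
  · intro A
    let M : Matrix (Fin m) (Fin m) ℝ := LinearMap.toMatrix b b (A : E →ₗ[ℝ] E)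
    let p : Polynomial ℝ := ((Polynomial.X : Polynomial ℝ) • M.map Polynomial.C +
      (1 : Matrix (Fin m) (Fin m) ℝ).map Polynomial.C).det
    have hp : ∀ t : ℝ, p.eval t = (1 + t • A).det := by
      intro t
      have h1 : (1 + t • A).det = (1 + t • M).det := by
        change LinearMap.det ((1 + t • A : E →L[ℝ] E) : E →ₗ[ℝ] E) = _
        rw [← LinearMap.det_toMatrix b]
        congr 1
        have : ((1 + t • A : E →L[ℝ] E) : E →ₗ[ℝ] E) = LinearMap.id + t • (A : E →ₗ[ℝ] E) := rfl
        rw [this, map_add, map_smul, LinearMap.toMatrix_id]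
      rw [h1]
      simp only [p]
      rw [← Polynomial.coe_evalRingHom, RingHom.map_det]
      congr 1
      ext i j
      by_cases hij : i = j <;> simp [hij, add_comm, mul_comm t]
    have hdeg : p.degree < (Finset.range (m+1)).card := by
      rw [Finset.card_range]
      refine lt_of_le_of_lt Polynomial.degree_le_natDegree ?_
      have := Polynomial.natDegree_det_X_add_C_le M 1
      simp only [Fintype.card_fin] at this
      exact_mod_cast Nat.lt_succ_of_le this
    have h := Lagrange.eq_interpolate (v := v) (s := Finset.range (m+1)) hv.injOn hdeg
    have h2 := congrArg (Polynomial.eval 1) h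
    rw [hp, one_smul] at h2
    rw [h2, Lagrange.interpolate_apply, Polynomial.eval_finsetSum]
    refine Finset.sum_congr rfl fun k _ => ?_
    rw [Polynomial.eval_mul, Polynomial.eval_C, hp, mul_comm]

lemma brw_volume {E : Type*} [NormedAddCommGroup E] [NormedSpace ℝ E] [FiniteDimensional ℝ E]
    [MeasurableSpace E] [BorelSpace E] (μ : Measure E) [μ.IsAddHaarMeasure]
    (g : E → E) (g' : E → E →L[ℝ] E) (R : ℝ) (K : ℝ≥0) (hg : LipschitzWith K g)
    (hg0 : ∀ x, x ∉ ball (0:E) R → g x = 0)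
    (hd : ∀ x ∈ ball (0:E) R, HasFDerivAt g (g' x) x)
    (hc : ContinuousOn g' (ball (0:E) R)) :
    ∫ x in ball (0:E) R, (1 + g' x).det ∂μ = μ.real (ball (0:E) R) := by
  have hbd : ∀ x ∈ ball (0:E) R, ‖g' x‖ ≤ K := fun x hx =>
    (hd x hx).le_of_lipschitz hg
  have hfin : μ (ball (0:E) R) ≠ ∞ := measure_ball_lt_top.ne
  -- positivity near the identity
  obtain ⟨η, hη, hpos⟩ : ∃ η > 0, ∀ B : E →L[ℝ] E, ‖B‖ < η → 0 < (1 + B).det := by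
    have hcont : Continuous fun B : E →L[ℝ] E => (1 + B).det :=
      ContinuousLinearMap.continuous_det.comp (continuous_const.add continuous_id)
    have h0 : (0:ℝ) < (1 + (0 : E →L[ℝ] E)).det := by
      rw [add_zero]
      change 0 < LinearMap.det (LinearMap.id : E →ₗ[ℝ] E)
      simp
    obtain ⟨η, hη, h⟩ := Metric.mem_nhds_iff.1 ((isOpen_Ioi.preimage hcont).mem_nhds h0)
    exact ⟨η, hη, fun B hB => h (by simpa using hB)⟩
  let ε : ℝ := min η (1/2) / (K + 1)
  have hε : 0 < ε := by positivity
  obtain ⟨N, v, c, hv, hdet⟩ := brw_det_interp (E := E) ε hε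
  have hint : ∀ t : ℝ, IntegrableOn (fun x => (1 + t • g' x).det) (ball (0:E) R) μ := by
    intro t
    have hco : ContinuousOn (fun x => (1 + t • g' x).det) (ball (0:E) R) :=
      ContinuousLinearMap.continuous_det.comp_continuousOn
        (continuousOn_const.add (hc.const_smul t))
    -- bound
    have hcomp : IsCompact (closedBall (0 : E →L[ℝ] E) K) := isCompact_closedBall _ _
    obtain ⟨D, hD⟩ := hcomp.exists_bound_of_continuousOn
      (f := fun B : E →L[ℝ] E => (1 + t • B).det)
      (ContinuousLinearMap.continuous_det.comp
        (continuous_const.add (continuous_id.const_smul t))).continuousOn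
    refine IntegrableOn.of_bound (C := D) measure_ball_lt_top
      (hco.aestronglyMeasurable measurableSet_ball) ?_
    refine (ae_restrict_iff' measurableSet_ball).2 (Filter.Eventually.of_forall fun x hx => ?_)
    exact hD (g' x) (by simpa using hbd x hx)
  have hsmall : ∀ t : ℝ, 0 < t → t < ε →
      ∫ x in ball (0:E) R, (1 + t • g' x).det ∂μ = μ.real (ball (0:E) R) := by
    intro t ht htε
    have htK : t * (K + 1) < min η (1/2) := by
      rwa [lt_div_iff₀ (by positivity)] at htε
    have htK' : t * K < min η (1/2) := by nlinarith
    let f : E → E := fun x => x + t • g x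
    have hlip : ∀ x y, ‖(t • g x) - (t • g y)‖ ≤ (t * K) * ‖x - y‖ := by
      intro x y
      rw [← smul_sub, norm_smul, Real.norm_of_nonneg ht.le, mul_assoc]
      gcongr
      simpa [dist_eq_norm] using hg.dist_le_mul x y
    have happ : ApproximatesLinearOn f
        ((ContinuousLinearEquiv.refl ℝ E : E ≃L[ℝ] E) : E →L[ℝ] E) univ
        (t.toNNReal * K) := by
      intro x _ y _
      have : f x - f y - (x - y) = t • g x - t • g y := by
        simp only [f]; abel
      simpa [this, ht.le] using hlip x y
    have hc' : Subsingleton E ∨ (t.toNNReal * K) <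
        ‖((ContinuousLinearEquiv.refl ℝ E).symm : E →L[ℝ] E)‖₊⁻¹ := by
      rcases subsingleton_or_nontrivial E with h | h
      · exact Or.inl h
      · right
        have : ‖((ContinuousLinearEquiv.refl ℝ E).symm : E →L[ℝ] E)‖₊ = 1 := by
          have : ((ContinuousLinearEquiv.refl ℝ E).symm : E →L[ℝ] E) =
            ContinuousLinearMap.id ℝ E := rfl
          rw [this]; ext; simp
        rw [this, inv_one, ← NNReal.coe_lt_coe]
        simp only [NNReal.coe_mul, Real.coe_toNNReal _ ht.le, NNReal.coe_one]
        have := min_le_right η (1/2); linarith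
    have hinj : Function.Injective f :=
      injOn_univ.1 (happ.injOn hc')
    have hsurj : Function.Surjective f := happ.surjective hc'
    have hout : ∀ x, x ∉ ball (0:E) R → f x = x := fun x hx => by simp [f, hg0 x hx]
    have himg : f '' ball (0:E) R = ball (0:E) R := by
      ext y
      constructor
      · rintro ⟨x, hx, rfl⟩
        by_contra h
        exact h (by rwa [hinj (hout _ h)])
      · intro hy
        obtain ⟨x, rfl⟩ := hsurj y
        refine ⟨x, ?_, rfl⟩
        by_contra h
        rw [hout x h] at hy
        exact h hy
    have hfd : ∀ x ∈ ball (0:E) R, HasFDerivWithinAt f (1 + t • g' x) (ball (0:E) R) x :=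
      fun x hx => ((hasFDerivAt_id x).add ((hd x hx).const_smul t)).hasFDerivWithinAt
    have hJ := lintegral_abs_det_fderiv_eq_addHaar_image μ measurableSet_ball hfd hinj.injOn
    rw [himg] at hJ
    have hpos' : ∀ x ∈ ball (0:E) R, 0 < (1 + t • g' x).det := fun x hx => hpos _ (by
      rw [norm_smul, Real.norm_of_nonneg ht.le]
      calc t * ‖g' x‖ ≤ t * K := by gcongr; exact hbd x hx
        _ < min η (1/2) := htK'
        _ ≤ η := min_le_left _ _)
    rw [integral_eq_lintegral_of_nonneg_ae]
    · rw [Measure.real, ← hJ]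
      congr 1
      refine setLIntegral_congr_fun measurableSet_ball fun x hx => ?_
      simp only [abs_of_pos (hpos' x hx)]
    · exact (ae_restrict_iff' measurableSet_ball).2
        (Filter.Eventually.of_forall fun x hx => (hpos' x hx).le)
    · exact (hint t).aestronglyMeasurable
  have hsum : ∑ k ∈ Finset.range N, c k = 1 := by
    have h := hdet 0
    have h1 : (1 : E →L[ℝ] E).det = 1 := by
      change LinearMap.det (LinearMap.id : E →ₗ[ℝ] E) = 1
      simp
    simpa [h1] using h.symm
  calc ∫ x in ball (0:E) R, (1 + g' x).det ∂μ
      = ∫ x in ball (0:E) R, ∑ k ∈ Finset.range N, c k * (1 + v k • g' x).det ∂μ := by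
        refine integral_congr_ae (Filter.Eventually.of_forall fun x => hdet (g' x))
    _ = ∑ k ∈ Finset.range N, c k * ∫ x in ball (0:E) R, (1 + v k • g' x).det ∂μ := by
        rw [integral_finsetSum _ fun k _ => (hint (v k)).const_mul _]
        simp only [integral_const_mul]
    _ = ∑ k ∈ Finset.range N, c k * μ.real (ball (0:E) R) :=
        Finset.sum_congr rfl fun k _ => by rw [hsmall _ (hv k).1 (hv k).2]
    _ = _ := by rw [← Finset.sum_mul, hsum, one_mul]

lemma brw_smooth {E : Type*} [NormedAddCommGroup E] [InnerProductSpace ℝ E]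
    [FiniteDimensional ℝ E] (G : E → E) (hG : ContDiff ℝ 1 G) (R : ℝ) (hR : 0 < R)
    (hG0 : ∀ x, x ∉ ball (0:E) R → G x = 0) : ∃ x, G x = x := by
  by_contra! hne
  let _ : MeasurableSpace E := borel E
  have _ : BorelSpace E := ⟨rfl⟩
  let μ : Measure E := Measure.addHaar
  let h : E → E := fun x => x - G x
  have hh0 : ∀ x, h x ≠ 0 := fun x hx => hne x (sub_eq_zero.1 hx).symm
  have hh : ContDiff ℝ 1 h := contDiff_id.sub hG
  let r : E → E := fun x => (R / ‖h x‖) • h x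
  have hr : ContDiff ℝ 1 r :=
    (contDiff_const.div (hh.norm ℝ hh0) fun x => norm_ne_zero_iff.2 (hh0 x)).smul hh
  have hrn : ∀ x, ‖r x‖ = R := by
    intro x
    have := norm_ne_zero_iff.2 (hh0 x)
    simp only [r, norm_smul, norm_div, norm_norm, Real.norm_of_nonneg hR.le]
    field_simp
  have hrs : ∀ x : E, ‖x‖ = R → r x = x := by
    intro x hx
    have hhx : h x = x := by simp [h, hG0 x (by simp [hx])]
    simp only [r, hhx, hx, div_self hR.ne', one_smul]
  let q : E → E := fun x => r x - x
  have hq : ContDiff ℝ 1 q := hr.sub contDiff_id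
  have hrd : ∀ x, HasFDerivAt r (fderiv ℝ r x) x := fun x =>
    (hr.differentiable one_ne_zero x).hasFDerivAt
  have hqd : ∀ x, HasFDerivAt q (fderiv ℝ r x - 1) x := fun x =>
    (hrd x).sub (hasFDerivAt_id x)
  have hrc : Continuous (fderiv ℝ r) := hr.continuous_fderiv one_ne_zero
  obtain ⟨D, hD⟩ := (isCompact_closedBall (0:E) R).exists_bound_of_continuousOn
    (f := fun x => fderiv ℝ r x - 1) (hrc.sub continuous_const).continuousOn
  have hD0 : 0 ≤ D := (norm_nonneg _).trans (hD 0 (by simp [hR.le]))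
  have hqlip : ∀ x ∈ closedBall (0:E) R, ∀ y ∈ closedBall (0:E) R,
      ‖q x - q y‖ ≤ D * ‖x - y‖ := by
    intro x hx y hy
    exact (convex_closedBall (0:E) R).norm_image_sub_le_of_norm_hasFDerivWithin_le
      (fun z _ => (hqd z).hasFDerivWithinAt) hD hy hx
  classical
  let g : E → E := fun x => if x ∈ ball (0:E) R then q x else 0
  have hgq : ∀ x ∈ closedBall (0:E) R, g x = q x := by
    intro x hx
    by_cases hx' : x ∈ ball (0:E) R
    · simp only [g, if_pos hx']
    · have : ‖x‖ = R := le_antisymm (by simpa using hx) (by simpa using hx')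
      simp only [g, if_neg hx', q, hrs x this, sub_self]
  have hg0 : ∀ x, x ∉ ball (0:E) R → g x = 0 := fun x hx => by simp only [g, if_neg hx]
  have hcross : ∀ x ∈ ball (0:E) R, ∀ y, y ∉ ball (0:E) R → ‖g x - g y‖ ≤ D * ‖x - y‖ := by
    intro x hx y hy
    have hcont : ContinuousOn (fun s : ℝ => ‖x + s • (y - x)‖) (Icc 0 1) := by fun_prop
    have hiv := intermediate_value_Icc (zero_le_one' ℝ) hcont
    have hRm : R ∈ Icc (‖x + (0:ℝ) • (y - x)‖) (‖x + (1:ℝ) • (y - x)‖) := by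
      constructor
      · simpa using (mem_ball_zero_iff.1 hx).le
      · simpa using hy
    obtain ⟨s, ⟨hs0, hs1⟩, hs⟩ := hiv hRm
    simp only at hs
    set z := x + s • (y - x) with hz
    have hzc : z ∈ closedBall (0:E) R := by simp [hs]
    have hgz : g z = g y := by rw [hg0 y hy, hg0 z (by simp [hs])]
    rw [← hgz, hgq z hzc, hgq x (ball_subset_closedBall hx)]
    refine (hqlip x (ball_subset_closedBall hx) z hzc).trans ?_
    gcongr
    have : x - z = s • (x - y) := by rw [hz, smul_sub, smul_sub]; abel
    rw [this, norm_smul, Real.norm_of_nonneg hs0]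
    exact mul_le_of_le_one_left (norm_nonneg _) hs1
  have hglip : LipschitzWith D.toNNReal g := by
    refine LipschitzWith.of_dist_le_mul fun x y => ?_
    rw [Real.coe_toNNReal _ hD0, dist_eq_norm, dist_eq_norm]
    by_cases hx : x ∈ ball (0:E) R <;> by_cases hy : y ∈ ball (0:E) R
    · rw [hgq x (ball_subset_closedBall hx), hgq y (ball_subset_closedBall hy)]
      exact hqlip x (ball_subset_closedBall hx) y (ball_subset_closedBall hy)
    · exact hcross x hx y hy
    · rw [norm_sub_rev, norm_sub_rev x]
      exact hcross y hy x hx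
    · rw [hg0 x hx, hg0 y hy, sub_zero, norm_zero]
      positivity
  have hgd : ∀ x ∈ ball (0:E) R, HasFDerivAt g (fderiv ℝ r x - 1) x := by
    intro x hx
    refine (hqd x).congr_of_eventuallyEq ?_
    filter_upwards [isOpen_ball.mem_nhds hx] with y hy
    exact hgq y (ball_subset_closedBall hy)
  have hvol := brw_volume μ g (fun x => fderiv ℝ r x - 1) R D.toNNReal hglip hg0 hgd
    (hrc.sub continuous_const).continuousOn
  have hdet : ∀ x, (fderiv ℝ r x).det = 0 := by
    intro x
    by_contra hdet
    have hu : IsUnit (LinearMap.det (fderiv ℝ r x : E →ₗ[ℝ] E)) := isUnit_iff_ne_zero.2 hdet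
    have hsurj : Function.Surjective (fderiv ℝ r x : E →ₗ[ℝ] E) :=
      ((Module.End.isUnit_iff _).1 ((LinearMap.isUnit_iff_isUnit_det _).2 hu)).surjective
    obtain ⟨w, hw⟩ := hsurj (r x)
    have h1 : HasFDerivAt (fun y => inner ℝ (r y) (r y)) _ x := (hrd x).inner ℝ (hrd x)
    have h2 : (fun y => inner ℝ (r y) (r y)) = fun _ => R ^ 2 := by
      funext y; rw [real_inner_self_eq_norm_sq, hrn]
    rw [h2] at h1
    have h3 := congrArg (fun L : E →L[ℝ] ℝ => L w) (h1.unique (hasFDerivAt_const (R^2) x))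
    have hw' : fderiv ℝ r x w = r x := hw
    simp [fderivInnerCLM_apply, hw', hrn] at h3
    exact hR.ne' h3
  simp only [add_sub_cancel, hdet, integral_zero] at hvol
  have : 0 < μ.real (ball (0:E) R) :=
    ENNReal.toReal_pos (measure_ball_pos μ 0 hR).ne' measure_ball_lt_top.ne
  linarith

lemma brw_bounded {E : Type*} [NormedAddCommGroup E] [InnerProductSpace ℝ E]
    [FiniteDimensional ℝ E] (F : E → E) (hF : Continuous F) (ρ : ℝ) (hρ : ∀ x, ‖F x‖ ≤ ρ) :
    ∃ x, F x = x := by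
  by_contra! hne
  have hρ0 : 0 ≤ ρ := (norm_nonneg _).trans (hρ 0)
  let χ : E → ℝ := fun x => max 0 (min 1 (ρ + 1 - ‖x‖))
  have hχ0 : ∀ x, 0 ≤ χ x := fun x => le_max_left _ _
  have hχ1 : ∀ x, χ x ≤ 1 := fun x => max_le zero_le_one (min_le_left _ _)
  let F₁ : E → E := fun x => χ x • F x
  have hF₁ : Continuous F₁ := by
    have : Continuous χ := by fun_prop
    exact this.smul hF
  have hne₁ : ∀ x, F₁ x ≠ x := by
    intro x hx
    have hxn : ‖x‖ ≤ ρ := by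
      rw [← hx, norm_smul, Real.norm_of_nonneg (hχ0 x)]
      exact (mul_le_of_le_one_left (norm_nonneg _) (hχ1 x)).trans (hρ x)
    have : χ x = 1 := by
      simp only [χ]
      rw [min_eq_left (by linarith), max_eq_right zero_le_one]
    simp only [F₁, this, one_smul] at hx
    exact hne x hx
  obtain ⟨G, hG, hGd, hGs⟩ := hF₁.exists_contDiff_approx 1 (ε := fun x => ‖F₁ x - x‖)
    (by fun_prop) (fun x => norm_pos_iff.2 (sub_ne_zero.2 (hne₁ x)))
  obtain ⟨x, hx⟩ := brw_smooth G (by exact_mod_cast hG) (ρ + 1) (by linarith) (by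
    intro x hx
    by_contra h
    have h1 : F₁ x ≠ 0 := hGs h
    apply h1
    have : χ x = 0 := by
      have : ρ + 1 ≤ ‖x‖ := by simpa using hx
      simp only [χ]
      exact max_eq_left ((min_le_right _ _).trans (by linarith))
    simp [F₁, this])
  have := hGd x
  rw [hx, dist_comm, dist_eq_norm] at this
  exact lt_irrefl _ this

lemma brw_pi {n : ℕ} (F : (Fin n → ℝ) → Fin n → ℝ) (hF : Continuous F) (ρ : ℝ)
    (hρ : ∀ x, ‖F x‖ ≤ ρ) : ∃ x, F x = x := by
  let e := PiLp.continuousLinearEquiv 2 ℝ (fun _ : Fin n => ℝ)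
  obtain ⟨x, hx⟩ := brw_bounded (E := EuclideanSpace ℝ (Fin n)) (fun x => e.symm (F (e x)))
    (by fun_prop) (‖(e.symm : (Fin n → ℝ) →L[ℝ] EuclideanSpace ℝ (Fin n))‖ * ρ) (fun x =>
      (ContinuousLinearMap.le_opNorm (e.symm : (Fin n → ℝ) →L[ℝ] EuclideanSpace ℝ (Fin n)) _).trans
        (by gcongr; exact hρ _))
  refine ⟨e x, ?_⟩
  have := congrArg e hx
  simpa using this
end BrouwerAux

lemma damp_growth (g g' : ℝ → ℝ) (δ : ℝ) (hδ : 0 < δ) (hg : IsAdmissible g g')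
    (hL : ∀ x ∈ Icc (0:ℝ) 1, δ ≤ g' x / g x) (x y : ℝ) (hx : 0 ≤ x) (hxy : x < y) (hy : y ≤ 1) :
    g x * (1 + δ * (y - x)) ≤ g y := by
  obtain ⟨hd, -, -, hp, hp'⟩ := hg
  have hcont : ContinuousOn g (Icc 0 1) := fun z hz => (hd z hz).continuousWithinAt
  have hder : ∀ z ∈ Ioo (0:ℝ) 1, HasDerivAt g (g' z) z := fun z hz =>
    (hd z ⟨hz.1.le, hz.2.le⟩).hasDerivAt (Icc_mem_nhds hz.1 hz.2)
  have hmono : StrictMonoOn g (Icc 0 1) := by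
    refine strictMonoOn_of_deriv_pos (convex_Icc 0 1) hcont fun z hz => ?_
    rw [interior_Icc] at hz
    rw [(hder z hz).deriv]
    exact hp' z ⟨hz.1.le, hz.2.le⟩
  obtain ⟨c, hc, hc'⟩ := exists_hasDerivAt_eq_slope g g' hxy
    (hcont.mono (Icc_subset_Icc hx hy)) fun z hz => hder z ⟨hx.trans_lt hz.1, hz.2.trans_le hy⟩
  have hcI : c ∈ Icc (0:ℝ) 1 := ⟨hx.trans hc.1.le, hc.2.le.trans hy⟩
  have hxI : x ∈ Icc (0:ℝ) 1 := ⟨hx, hxy.le.trans hy⟩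
  have h1 := hL c hcI
  rw [le_div_iff₀ (hp c hcI)] at h1
  have h2 : g x ≤ g c := (hmono hxI hcI hc.1).le
  rw [eq_div_iff (by linarith)] at hc'
  have h3 : δ * g x ≤ g' c := le_trans (by gcongr) h1
  have h4 : δ * g x * (y - x) ≤ g' c * (y - x) :=
    mul_le_mul_of_nonneg_right h3 (by linarith)
  nlinarith

/-- explicit retraction of `ℝⁿ` onto `{y ≥ 0, ∑ y ≤ b}` -/
noncomputable def dampRet {n : ℕ} (b : ℝ) (y : Fin n → ℝ) : Fin n → ℝ :=
  fun i => max (y i) 0 / max 1 ((∑ k, max (y k) 0) / b)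

lemma dampRet_continuous {n : ℕ} (b : ℝ) : Continuous (dampRet (n := n) b) := by
  refine continuous_pi fun i => ?_
  refine Continuous.div (by fun_prop) (by fun_prop) fun y => ?_
  exact (lt_of_lt_of_le one_pos (le_max_left _ _)).ne'

lemma dampRet_nonneg {n : ℕ} (b : ℝ) (y : Fin n → ℝ) (i : Fin n) : 0 ≤ dampRet b y i :=
  div_nonneg (le_max_right _ _) (zero_le_one.trans (le_max_left _ _))

lemma dampRet_sum {n : ℕ} (b : ℝ) (hb : 0 < b) (y : Fin n → ℝ) : ∑ i, dampRet b y i ≤ b := by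
  unfold dampRet
  rw [← Finset.sum_div, div_le_iff₀ (lt_of_lt_of_le one_pos (le_max_left _ _))]
  have h := le_max_right (1:ℝ) ((∑ k, max (y k) 0) / b)
  rw [div_le_iff₀ hb] at h
  linarith

lemma dampRet_id {n : ℕ} (b : ℝ) (hb : 0 < b) (y : Fin n → ℝ) (hy : ∀ i, 0 ≤ y i)
    (hs : ∑ i, y i ≤ b) : dampRet b y = y := by
  funext i
  have h : ∀ k, max (y k) 0 = y k := fun k => max_eq_left (hy k)
  simp only [dampRet, h]
  rw [max_eq_left ((div_le_one hb).2 hs), div_one]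

lemma simplex_mem_Icc {n : ℕ} (x : Fin n → ℝ) (hx : x ∈ stdSimplex ℝ (Fin n)) (i : Fin n) :
    x i ∈ Icc (0:ℝ) 1 :=
  ⟨hx.1 i, hx.2 ▸ Finset.single_le_sum (fun j _ => hx.1 j) (Finset.mem_univ i)⟩

lemma fd_mem {n : ℕ} (C : Matrix (Fin n) (Fin n) ℝ) (d : Fin n → ℝ) (γ : ℝ) (g₁ g₂ : ℝ → ℝ)
    (x : Fin n → ℝ) (hx : x ∈ stdSimplex ℝ (Fin n)) (hγ0 : 0 < γ) (hγ1 : γ < 1)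
    (hC0 : ∀ i j, 0 ≤ C i j) (hd : ∀ i, 0 < d i)
    (hg1 : ∀ z ∈ Icc (0:ℝ) 1, 0 < g₁ z) (hg2 : ∀ z ∈ Icc (0:ℝ) 1, 0 < g₂ z)
    (hS1 : ∀ i, 0 < ∑ k, C i k * g₁ (x k)) (hS2 : 0 < ∑ k, d k * g₂ (x k)) :
    fd C d γ g₁ g₂ x ∈ stdSimplex ℝ (Fin n) := by
  have hI := simplex_mem_Icc x hx
  have hγ1' : 0 < 1 - γ := by linarith
  constructor
  · intro j
    simp only [fd, Matrix.vecMul, dotProduct, Md, Matrix.of_apply]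
    refine Finset.sum_nonneg fun i _ => mul_nonneg (hx.1 i) (add_nonneg ?_ ?_)
    · have := hC0 i j
      have := hg1 _ (hI j)
      have := hS1 i
      positivity
    · have := hd j
      have := hg2 _ (hI j)
      positivity
  · simp only [fd, Matrix.vecMul, dotProduct, Md, Matrix.of_apply]
    rw [Finset.sum_comm]
    simp_rw [← Finset.mul_sum, Finset.sum_add_distrib, ← Finset.mul_sum, ← Finset.sum_div]
    simp_rw [div_self hS2.ne', fun i => div_self (hS1 i).ne']
    simp [hx.2]

theorem damped_fixed_point_majority_first_column_positive
    (n : ℕ) (C : Matrix (Fin (n+1)) (Fin (n+1)) ℝ)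
    (hC0 : ∀ i j, 0 ≤ C i j) (hrow : ∀ i, ∃ j, 0 < C i j)
    (hcol : ∀ i, 0 < C i 0)
    (d : Fin (n+1) → ℝ) (hd : ∀ i, 0 < d i)
    (γ : ℝ) (hγ0 : 1/2 < γ) (hγ1 : γ < 1) :
    ∃ δ : ℝ, 0 < δ ∧
      ∀ g₁ g₁' : ℝ → ℝ, ∀ Lm₁ : ℝ, IsAdmissible g₁ g₁' →
        IsLeast (ratioSet g₁ g₁') Lm₁ → δ ≤ Lm₁ →
        ∀ g₂ g₂' : ℝ → ℝ, IsWeight g₂ g₂' →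
          ∃ x ∈ stdSimplex ℝ (Fin (n+1)), 1/2 < x 0 ∧ fd C d γ g₁ g₂ x = x := by
  classical
  set a : ℝ := (1/2 + γ) / 2 with ha
  have ha1 : 1/2 < a := by rw [ha]; linarith
  have haγ : a < γ := by rw [ha]; linarith
  have hb : 0 < 1 - a := by linarith
  let Q : Fin (n+1) → ℝ := fun i => a * (∑ k, C i k) / ((γ - a) * C i 0)
  have hγa : 0 < γ - a := by linarith
  have hQ : ∀ i, 0 ≤ Q i := fun i => by
    have := Finset.sum_nonneg fun k (_ : k ∈ Finset.univ) => hC0 i k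
    have := hcol i
    positivity
  have h2a : 0 < 2 * a - 1 := by linarith
  have hQs : 0 ≤ ∑ i, Q i := Finset.sum_nonneg fun i _ => hQ i
  refine ⟨(∑ i, Q i + 1) / (2 * a - 1), by positivity, ?_⟩
  set δ := (∑ i, Q i + 1) / (2 * a - 1) with hδdef
  have hδ : 0 < δ := by positivity
  intro g₁ g₁' Lm hg₁ hleast hle g₂ g₂' hg₂
  have hL : ∀ x ∈ Icc (0:ℝ) 1, δ ≤ g₁' x / g₁ x := fun x hx =>
    hle.trans (hleast.2 ⟨x, hx, rfl⟩)
  have hp1 := hg₁.2.2.2.1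
  have hp2 := hg₂.2.2.2.1
  have hc1 : ContinuousOn g₁ (Icc 0 1) := fun z hz => (hg₁.1 z hz).continuousWithinAt
  have hc2 : ContinuousOn g₂ (Icc 0 1) := fun z hz => (hg₂.1 z hz).continuousWithinAt
  have hS1 : ∀ x ∈ stdSimplex ℝ (Fin (n+1)), ∀ i, 0 < ∑ k, C i k * g₁ (x k) := by
    intro x hx i
    refine Finset.sum_pos' (fun k _ => mul_nonneg (hC0 i k) (hp1 _ (simplex_mem_Icc x hx k)).le)
      ⟨0, Finset.mem_univ _, mul_pos (hcol i) (hp1 _ (simplex_mem_Icc x hx 0))⟩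
  have hS2 : ∀ x ∈ stdSimplex ℝ (Fin (n+1)), 0 < ∑ k, d k * g₂ (x k) := by
    intro x hx
    exact Finset.sum_pos (fun k _ => mul_pos (hd k) (hp2 _ (simplex_mem_Icc x hx k)))
      Finset.univ_nonempty
  have hmem : ∀ x ∈ stdSimplex ℝ (Fin (n+1)), fd C d γ g₁ g₂ x ∈ stdSimplex ℝ (Fin (n+1)) :=
    fun x hx => fd_mem C d γ g₁ g₂ x hx (by linarith) hγ1 hC0 hd hp1 hp2 (hS1 x hx) (hS2 x hx)
  -- the key estimate
  have hkey : ∀ x ∈ stdSimplex ℝ (Fin (n+1)), a ≤ x 0 → a ≤ fd C d γ g₁ g₂ x 0 := by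
    intro x hx hx0
    have hI := simplex_mem_Icc x hx
    have hM : ∀ i, a ≤ Md C d γ g₁ g₂ x i 0 := by
      intro i
      have hg0 : 0 < g₁ (x 0) := hp1 _ (hI 0)
      have hq : 0 < 1 + δ * (2 * a - 1) := by positivity
      have hterm : ∀ k : Fin n,
          C i k.succ * g₁ (x k.succ) * (1 + δ * (2 * a - 1)) ≤ C i k.succ * g₁ (x 0) := by
        intro k
        have hxk : x k.succ ≤ 1 - a := by
          have h := hx.2
          rw [Fin.sum_univ_succ] at h
          have := Finset.single_le_sum (f := fun j : Fin n => x j.succ)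
            (fun j _ => hx.1 j.succ) (Finset.mem_univ k)
          linarith
        have h1 := damp_growth g₁ g₁' δ hδ hg₁ hL (x k.succ) (x 0) (hx.1 _) (by linarith) (hI 0).2
        have h2 : g₁ (x k.succ) * (1 + δ * (2 * a - 1)) ≤ g₁ (x 0) := by
          refine le_trans ?_ h1
          have := (hp1 _ (hI k.succ)).le
          have hab : 2 * a - 1 ≤ x 0 - x k.succ := by linarith
          gcongr
        rw [mul_assoc]
        exact mul_le_mul_of_nonneg_left h2 (hC0 _ _)
      have hsum : (∑ k : Fin n, C i k.succ * g₁ (x k.succ)) * (1 + δ * (2 * a - 1)) ≤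
          (∑ k, C i k) * g₁ (x 0) := by
        rw [Finset.sum_mul]
        refine (Finset.sum_le_sum fun k _ => hterm k).trans ?_
        rw [← Finset.sum_mul]
        gcongr
        rw [Fin.sum_univ_succ (f := fun k => C i k)]
        linarith [hcol i]
      have hδQ : Q i ≤ 1 + δ * (2 * a - 1) := by
        have : δ * (2 * a - 1) = ∑ i, Q i + 1 := by rw [hδdef]; field_simp
        rw [this]
        have := Finset.single_le_sum (fun j _ => hQ j) (Finset.mem_univ i)
        linarith
      have hδQ' : a * (∑ k, C i k) ≤ (1 + δ * (2 * a - 1)) * ((γ - a) * C i 0) := by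
        have hpos : 0 < (γ - a) * C i 0 := mul_pos hγa (hcol i)
        exact (div_le_iff₀ hpos).1 hδQ
      have hrest : a * (∑ k : Fin n, C i k.succ * g₁ (x k.succ)) ≤
          (γ - a) * C i 0 * g₁ (x 0) := by
        refine le_of_mul_le_mul_right ?_ hq
        calc a * (∑ k : Fin n, C i k.succ * g₁ (x k.succ)) * (1 + δ * (2 * a - 1))
            = a * ((∑ k : Fin n, C i k.succ * g₁ (x k.succ)) * (1 + δ * (2 * a - 1))) := by ring
          _ ≤ a * ((∑ k, C i k) * g₁ (x 0)) := by gcongr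
          _ = (a * (∑ k, C i k)) * g₁ (x 0) := by ring
          _ ≤ ((1 + δ * (2 * a - 1)) * ((γ - a) * C i 0)) * g₁ (x 0) := by gcongr
          _ = _ := by ring
      have hfirst : a ≤ γ * (C i 0 * g₁ (x 0) / ∑ k, C i k * g₁ (x k)) := by
        rw [← mul_div_assoc, le_div_iff₀ (hS1 x hx i), Fin.sum_univ_succ]
        linarith
      have hsecond : 0 ≤ (1 - γ) * (d 0 * g₂ (x 0) / ∑ k, d k * g₂ (x k)) := by
        have := hd 0
        have := hp2 _ (hI 0)
        have := hS2 x hx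
        have : 0 < 1 - γ := by linarith
        positivity
      simp only [Md, Matrix.of_apply]
      linarith
    calc a = ∑ i, x i * a := by rw [← Finset.sum_mul, hx.2, one_mul]
      _ ≤ ∑ i, x i * Md C d γ g₁ g₂ x i 0 :=
        Finset.sum_le_sum fun i _ => mul_le_mul_of_nonneg_left (hM i) (hx.1 i)
      _ = fd C d γ g₁ g₂ x 0 := rfl
  -- Brouwer
  let X : (Fin n → ℝ) → Fin (n+1) → ℝ := fun y =>
    Fin.cons (1 - ∑ i, dampRet (1 - a) y i) (dampRet (1 - a) y)
  have hX0 : ∀ y, a ≤ X y 0 := fun y => by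
    have := dampRet_sum (1 - a) hb y
    simp only [X, Fin.cons_zero]; linarith
  have hXmem : ∀ y, X y ∈ stdSimplex ℝ (Fin (n+1)) := by
    intro y
    constructor
    · intro i
      refine Fin.cases ?_ (fun j => ?_) i
      · linarith [hX0 y]
      · simpa [X] using dampRet_nonneg (1 - a) y j
    · simp [X, Fin.sum_univ_succ]
  have hXc : ∀ i, Continuous fun y => X y i := by
    have hr : ∀ j, Continuous fun y : Fin n → ℝ => dampRet (1 - a) y j := fun j =>
      (continuous_apply j).comp (dampRet_continuous (1 - a))
    intro i
    refine Fin.cases ?_ (fun j => ?_) i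
    · simp only [X, Fin.cons_zero]
      exact continuous_const.sub (continuous_finsetSum _ fun j _ => hr j)
    · simpa [X] using hr j
  have hgc1 : ∀ i, Continuous fun y => g₁ (X y i) := fun i =>
    hc1.comp_continuous (hXc i) fun y => simplex_mem_Icc _ (hXmem y) i
  have hgc2 : ∀ i, Continuous fun y => g₂ (X y i) := fun i =>
    hc2.comp_continuous (hXc i) fun y => simplex_mem_Icc _ (hXmem y) i
  have hfc : ∀ j, Continuous fun y => fd C d γ g₁ g₂ (X y) j := by
    intro j
    simp only [fd, Matrix.vecMul, dotProduct, Md, Matrix.of_apply]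
    refine continuous_finsetSum _ fun i _ => (hXc i).mul (Continuous.add ?_ ?_)
    · exact continuous_const.mul ((continuous_const.mul (hgc1 j)).div
        (continuous_finsetSum _ fun k _ => continuous_const.mul (hgc1 k))
        fun y => (hS1 _ (hXmem y) i).ne')
    · exact continuous_const.mul ((continuous_const.mul (hgc2 j)).div
        (continuous_finsetSum _ fun k _ => continuous_const.mul (hgc2 k))
        fun y => (hS2 _ (hXmem y)).ne')
  obtain ⟨y, hy⟩ := brw_pi (fun (y : Fin n → ℝ) (i : Fin n) => fd C d γ g₁ g₂ (X y) i.succ)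
    (continuous_pi fun i => hfc i.succ) 1 (fun y => by
      refine (pi_norm_le_iff_of_nonneg zero_le_one).2 fun i => ?_
      have := simplex_mem_Icc _ (hmem _ (hXmem y)) i.succ
      rw [Real.norm_of_nonneg this.1]
      exact this.2)
  have hy' : ∀ i : Fin n, fd C d γ g₁ g₂ (X y) i.succ = y i := fun i => congrFun hy i
  have hf := hmem _ (hXmem y)
  have hf0 := hkey _ (hXmem y) (hX0 y)
  have hfs := hf.2
  rw [Fin.sum_univ_succ] at hfs
  simp only [hy'] at hfs
  have hret : dampRet (1 - a) y = y := by
    refine dampRet_id (1 - a) hb y (fun i => ?_) (by linarith)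
    rw [← hy' i]
    exact hf.1 _
  refine ⟨X y, hXmem y, by linarith [hX0 y], ?_⟩
  funext i
  refine Fin.cases ?_ (fun j => ?_) i
  · simp only [X, Fin.cons_zero] at hfs ⊢
    rw [hret] at hfs ⊢
    linarith
  · rw [hy' j]
    simp [X, hret]
end

section
/- Let C be an n×n nonnegative matrix with no zero row, A = diag(C·1)⁻¹·C its row-normalization (A_{ij} = C_{ij}/Σ_k C_{ik}), d ∈ ℝⁿ_{>0}, and g₂ an admissible weight function. For γ ∈ (0,1), define f_γ : Σ → Σ by f_γ(x) = x·M_γ(x), where M_γ(x)_{ij} = γ·A_{ij} + (1−γ)·d_j g₂(x_j)/Σ_k d_k g₂(x_k). Then for every norm ‖·‖ on ℝⁿ and every ε > 0, there exists γ_ε ∈ (0,1) such that for every γ with γ_ε < γ < 1 and every fixed point x ∈ Σ of f_γ, there exists a stochastic vector u ∈ Σ with u·A = u and ‖x − u‖ < ε. -/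
open Set Matrix

/-- The row-normalization `A = diag(C·1)⁻¹·C` of `C`. -/
noncomputable def rowNorm {n : ℕ} (C : Matrix (Fin n) (Fin n) ℝ) :
    Matrix (Fin n) (Fin n) ℝ :=
  Matrix.of fun i j => C i j / ∑ k, C i k

/-- The transition matrix `M_γ(x)_{ij} = γ·A_{ij} + (1−γ)·d_j g₂(x_j)/Σ_k d_k g₂(x_k)`. -/
noncomputable def Mγmat {n : ℕ} (C : Matrix (Fin n) (Fin n) ℝ) (d : Fin n → ℝ)
    (g₂ : ℝ → ℝ) (γ : ℝ) (x : Fin n → ℝ) : Matrix (Fin n) (Fin n) ℝ :=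
  Matrix.of fun i j =>
    γ * rowNorm C i j + (1 - γ) * (d j * g₂ (x j) / ∑ k, d k * g₂ (x k))

/-- The map `f_γ(x) = x · M_γ(x)`. -/
noncomputable def fγ {n : ℕ} (C : Matrix (Fin n) (Fin n) ℝ) (d : Fin n → ℝ)
    (g₂ : ℝ → ℝ) (γ : ℝ) (x : Fin n → ℝ) : Fin n → ℝ :=
  Matrix.vecMul x (Mγmat C d g₂ γ x)

/-- As the damping factor `γ` tends to `1`, fixed points of `f_γ` approach the set of
invariant measures of the row-normalization `A` of `C`. -/
theorem damping_to_one_fixed_points_near_invariant_measures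
    (n : ℕ) (C : Matrix (Fin n) (Fin n) ℝ)
    (hC0 : ∀ i j, 0 ≤ C i j) (hrow : ∀ i, ∃ j, 0 < C i j)
    (d : Fin n → ℝ) (hd : ∀ i, 0 < d i)
    (g₂ g₂' : ℝ → ℝ) (hg₂ : IsAdmissible g₂ g₂')
    (N : (Fin n → ℝ) → ℝ)
    (hN_add : ∀ v w, N (v + w) ≤ N v + N w)
    (hN_smul : ∀ (c : ℝ) (v : Fin n → ℝ), N (c • v) = |c| * N v)
    (hN_def : ∀ v, N v = 0 → v = 0)
    (ε : ℝ) (hε : 0 < ε) :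
    ∃ γε : ℝ, 0 < γε ∧ γε < 1 ∧
      ∀ γ : ℝ, γε < γ → γ < 1 →
        ∀ x ∈ stdSimplex ℝ (Fin n), fγ C d g₂ γ x = x →
          ∃ u ∈ stdSimplex ℝ (Fin n),
            Matrix.vecMul u (rowNorm C) = u ∧ N (x - u) < ε := by
  have hNc : Continuous N := by
    let p : Seminorm ℝ (Fin n → ℝ) := Seminorm.of N hN_add (fun c v => by
      rw [hN_smul, Real.norm_eq_abs])
    have h : ConvexOn ℝ Set.univ N := p.convexOn
    exact h.locallyLipschitz.continuous
  have hN0 : N 0 = 0 := by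
    have := hN_smul 0 0
    simpa using this
  have hS : ∀ i, 0 < ∑ k, C i k := fun i => by
    obtain ⟨j, hj⟩ := hrow i
    exact Finset.sum_pos' (fun k _ => hC0 i k) ⟨j, Finset.mem_univ _, hj⟩
  have hA0 : ∀ i j, 0 ≤ rowNorm C i j := fun i j => div_nonneg (hC0 i j) (hS i).le
  have hA1 : ∀ i j, rowNorm C i j ≤ 1 := fun i j =>
    (div_le_one (hS i)).2 (Finset.single_le_sum (fun k _ => hC0 i k) (Finset.mem_univ j))
  -- the basic estimate at fixed points
  have key : ∀ γ : ℝ, γ < 1 → ∀ x ∈ stdSimplex ℝ (Fin n), fγ C d g₂ γ x = x →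
      ‖x - Matrix.vecMul x (rowNorm C)‖ ≤ 1 - γ := by
    intro γ hγ x hx hfix
    rw [pi_norm_le_iff_of_nonneg (by linarith)]
    intro j
    have hxI : ∀ k, x k ∈ Set.Icc (0:ℝ) 1 := fun k =>
      ⟨hx.1 k, hx.2 ▸ Finset.single_le_sum (fun i _ => hx.1 i) (Finset.mem_univ k)⟩
    have hpos : ∀ k, 0 < d k * g₂ (x k) := fun k => mul_pos (hd k) (hg₂.2.2.2.1 _ (hxI k))
    have hle : d j * g₂ (x j) ≤ ∑ k, d k * g₂ (x k) :=
      Finset.single_le_sum (f := fun k => d k * g₂ (x k))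
        (fun k _ => (hpos k).le) (Finset.mem_univ j)
    have hp0 : 0 ≤ d j * g₂ (x j) / ∑ k, d k * g₂ (x k) :=
      div_nonneg (hpos j).le ((hpos j).le.trans hle)
    have hp1 : d j * g₂ (x j) / ∑ k, d k * g₂ (x k) ≤ 1 :=
      (div_le_one ((hpos j).trans_le hle)).2 hle
    have hf := congrFun hfix j
    have hexp : fγ C d g₂ γ x j = γ * Matrix.vecMul x (rowNorm C) j
        + (1 - γ) * (d j * g₂ (x j) / ∑ k, d k * g₂ (x k)) := by
      simp only [fγ, Mγmat, Matrix.vecMul, dotProduct, Matrix.of_apply, mul_add,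
        Finset.sum_add_distrib, ← Finset.sum_mul, hx.2, one_mul, Finset.mul_sum]
      congr 1
      exact Finset.sum_congr rfl fun i _ => by ring
    have hq0 : 0 ≤ Matrix.vecMul x (rowNorm C) j := by
      simp only [Matrix.vecMul, dotProduct]
      exact Finset.sum_nonneg fun i _ => mul_nonneg (hx.1 i) (hA0 i j)
    have hq1 : Matrix.vecMul x (rowNorm C) j ≤ 1 := by
      rw [← hx.2]
      simp only [Matrix.vecMul, dotProduct]
      exact Finset.sum_le_sum fun i _ => mul_le_of_le_one_right (hx.1 i) (hA1 i j)
    rw [hexp] at hf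
    generalize d j * g₂ (x j) / ∑ k, d k * g₂ (x k) = p at *
    rw [Pi.sub_apply, Real.norm_eq_abs]
    generalize Matrix.vecMul x (rowNorm C) j = q at *
    rw [← hf, abs_le]
    constructor <;> nlinarith
  let K : Set (Fin n → ℝ) := stdSimplex ℝ (Fin n) ∩
    ⋂ u ∈ {u | u ∈ stdSimplex ℝ (Fin n) ∧ Matrix.vecMul u (rowNorm C) = u},
      {x | ε ≤ N (x - u)}
  have hK : IsCompact K := by
    refine (isCompact_stdSimplex ℝ (Fin n)).inter_right ?_
    refine isClosed_biInter fun u _ => ?_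
    exact isClosed_le continuous_const (hNc.comp (continuous_id.sub continuous_const))
  have hF : Continuous fun x : Fin n → ℝ => ‖x - Matrix.vecMul x (rowNorm C)‖ := by
    fun_prop
  have hm : ∃ m : ℝ, 0 < m ∧ ∀ x ∈ K, m ≤ ‖x - Matrix.vecMul x (rowNorm C)‖ := by
    rcases K.eq_empty_or_nonempty with h | h
    · exact ⟨1, one_pos, by simp [h]⟩
    · obtain ⟨x, hxK, hmin⟩ := hK.exists_isMinOn h hF.continuousOn
      refine ⟨_, ?_, fun y hy => hmin hy⟩
      rw [norm_pos_iff]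
      intro h0
      have h1 : ε ≤ N (x - x) :=
        Set.mem_iInter₂.1 hxK.2 x ⟨hxK.1, (sub_eq_zero.1 h0).symm⟩
      rw [sub_self, hN0] at h1
      linarith
  obtain ⟨m, hm0, hm⟩ := hm
  refine ⟨max (1/2) (1 - m), by positivity, max_lt (by norm_num) (by linarith), ?_⟩
  intro γ hγ hγ1 x hx hfix
  by_contra hcon
  push Not at hcon
  have hxK : x ∈ K := ⟨hx, Set.mem_iInter₂.2 fun u hu => hcon u hu.1 hu.2⟩
  have h1 := hm x hxK
  have h2 := key γ hγ1 x hx hfix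
  have h3 := (le_max_right (1/2) (1 - m)).trans_lt hγ
  linarith
end

section
/- Let n ≥ 1, T > 0, and let C be the n×n matrix of all ones with weight function g_T(x) = e^{x/T}. Then x ∈ Σ is a fixed point of u_T if and only if x ∈ Σ and there exist a subset K ⊆ {1,…,n}, y ∈ [0,T] and z ≥ T such that y·e^{−y/T} = z·e^{−z/T}, |K|·y + (n−|K|)·z = 1, x_i = y for all i ∈ K, and x_i = z for all i ∉ K. -/
open Set

/-- For the complete graph (the matrix of all ones) with weight `g_T(x) = e^{x/T}`,
the unique invariant measure of `M_T(x)` is `u_T(x)_i = e^{x_i/T} / Σ_k e^{x_k/T}`. -/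
noncomputable def uT (n : ℕ) (T : ℝ) (x : Fin n → ℝ) : Fin n → ℝ :=
  fun i => Real.exp (x i / T) / ∑ k, Real.exp (x k / T)

theorem aux_inc (T a b : ℝ) (hT : 0 < T) (ha : 0 ≤ a) (hab : a < b) (hb : b ≤ T) :
    a * Real.exp (-a / T) < b * Real.exp (-b / T) := by
  have hb0 : 0 < b := lt_of_le_of_lt ha hab
  have h1 : (a - b) / T + 1 < Real.exp ((a - b) / T) :=
    Real.add_one_lt_exp (div_ne_zero (by linarith) hT.ne')
  have h2 : a ≤ b * ((a - b) / T + 1) := by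
    have : b * ((a - b) / T + 1) - a = (b - a) * (T - b) / T := by
      field_simp
      ring
    have h3 : 0 ≤ (b - a) * (T - b) / T :=
      div_nonneg (mul_nonneg (by linarith) (by linarith)) hT.le
    linarith
  have h4 : Real.exp (-b / T) = Real.exp ((a - b) / T) * Real.exp (-a / T) := by
    rw [← Real.exp_add]
    congr 1
    ring
  rw [h4, ← mul_assoc]
  exact mul_lt_mul_of_pos_right (lt_of_le_of_lt h2 (mul_lt_mul_of_pos_left h1 hb0))
    (Real.exp_pos _)

theorem aux_dec (T a b : ℝ) (hT : 0 < T) (ha : T ≤ a) (hab : a < b) :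
    b * Real.exp (-b / T) < a * Real.exp (-a / T) := by
  have ha0 : 0 < a := lt_of_lt_of_le hT ha
  have h1 : (b - a) / T + 1 < Real.exp ((b - a) / T) :=
    Real.add_one_lt_exp (div_ne_zero (by linarith) hT.ne')
  have h2 : b ≤ a * ((b - a) / T + 1) := by
    have : a * ((b - a) / T + 1) - b = (b - a) * (a - T) / T := by
      field_simp
      ring
    have h3 : 0 ≤ (b - a) * (a - T) / T :=
      div_nonneg (mul_nonneg (by linarith) (by linarith)) hT.le
    linarith
  have h4 : Real.exp (-a / T) = Real.exp ((b - a) / T) * Real.exp (-b / T) := by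
    rw [← Real.exp_add]
    congr 1
    ring
  rw [h4, ← mul_assoc]
  exact mul_lt_mul_of_pos_right (lt_of_le_of_lt h2 (mul_lt_mul_of_pos_left h1 ha0))
    (Real.exp_pos _)

theorem aux_exists (T t : ℝ) (hT : 0 < T) (ht : 0 < t) :
    ∃ y z : ℝ, y ∈ Set.Icc 0 T ∧ T ≤ z ∧
      y * Real.exp (-y / T) = t * Real.exp (-t / T) ∧
      z * Real.exp (-z / T) = t * Real.exp (-t / T) := by
  have hcont : Continuous (fun s : ℝ => s * Real.exp (-s / T)) := by fun_prop
  set c := t * Real.exp (-t / T) with hc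
  have hc0 : 0 < c := mul_pos ht (Real.exp_pos _)
  have hcT : c ≤ T * Real.exp (-T / T) := by
    rcases lt_trichotomy t T with h | h | h
    · exact (aux_inc T t T hT ht.le h le_rfl).le
    · rw [hc, h]
    · exact (aux_dec T T t hT le_rfl h).le
  obtain ⟨y, hy, hyc⟩ := intermediate_value_Icc hT.le hcont.continuousOn
    (show c ∈ Set.Icc ((0 : ℝ) * Real.exp (-0 / T)) (T * Real.exp (-T / T)) from
      ⟨by simpa using hc0.le, hcT⟩)
  have hZ : ∃ Z, T ≤ Z ∧ Z * Real.exp (-Z / T) ≤ c := by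
    refine ⟨max T (2 * T ^ 2 / c), le_max_left _ _, ?_⟩
    set Z := max T (2 * T ^ 2 / c)
    have hZT : T ≤ Z := le_max_left _ _
    have hZc : 2 * T ^ 2 / c ≤ Z := le_max_right _ _
    have hZ0 : 0 < Z := lt_of_lt_of_le hT hZT
    rw [div_le_iff₀ hc0] at hZc
    have hq := Real.quadratic_le_exp_of_nonneg (div_pos hZ0 hT).le
    have hq2 : (Z / T) ^ 2 / 2 ≤ Real.exp (Z / T) := by
      have := div_pos hZ0 hT
      linarith
    rw [neg_div, Real.exp_neg, ← div_eq_mul_inv, div_le_iff₀ (Real.exp_pos _)]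
    refine le_trans ?_ (mul_le_mul_of_nonneg_left hq2 hc0.le)
    have : c * ((Z / T) ^ 2 / 2) = Z * (Z * c) / (2 * T ^ 2) := by
      field_simp
    rw [this, le_div_iff₀ (by positivity)]
    exact mul_le_mul_of_nonneg_left hZc hZ0.le
  obtain ⟨Z, hZT, hZc⟩ := hZ
  obtain ⟨z, hz, hzc⟩ := intermediate_value_Icc' hZT hcont.continuousOn
    (show c ∈ Set.Icc (Z * Real.exp (-Z / T)) (T * Real.exp (-T / T)) from ⟨hZc, hcT⟩)
  exact ⟨y, z, hy, hz.1, hyc, hzc⟩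

/-- For the complete graph, `x ∈ Σ` is a fixed point of `u_T` if and only if there are
`K ⊆ {1,…,n}`, `y ∈ [0,T]` and `z ≥ T` with `y·e^{−y/T} = z·e^{−z/T}`,
`|K|·y + (n−|K|)·z = 1`, `x_i = y` on `K` and `x_i = z` off `K`. -/
theorem complete_graph_fixed_point_two_level_characterization
    (n : ℕ) (hn : 0 < n) (T : ℝ) (hT : 0 < T) :
    ∀ x ∈ stdSimplex ℝ (Fin n),
      (uT n T x = x ↔
        ∃ (K : Finset (Fin n)) (y z : ℝ),
          y ∈ Set.Icc 0 T ∧ T ≤ z ∧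
          y * Real.exp (-y / T) = z * Real.exp (-z / T) ∧
          (K.card : ℝ) * y + ((n : ℝ) - K.card) * z = 1 ∧
          (∀ i ∈ K, x i = y) ∧ (∀ i ∉ K, x i = z)) := by
  intro x hx
  have hS : 0 < ∑ k, Real.exp (x k / T) :=
    Finset.sum_pos (fun _ _ => Real.exp_pos _) ⟨⟨0, hn⟩, Finset.mem_univ _⟩
  constructor
  · intro h
    have hxi : ∀ i, Real.exp (x i / T) / ∑ k, Real.exp (x k / T) = x i := fun i => congrFun h i
    have hpos : ∀ i, 0 < x i := fun i => by
      rw [← hxi i]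
      exact div_pos (Real.exp_pos _) hS
    have hf : ∀ i, x i * Real.exp (-x i / T) = 1 / ∑ k, Real.exp (x k / T) := fun i => by
      have h1 := hxi i
      rw [div_eq_iff hS.ne'] at h1
      rw [eq_div_iff hS.ne', neg_div, Real.exp_neg, mul_right_comm, ← h1,
        mul_inv_cancel₀ (Real.exp_pos _).ne']
    obtain ⟨y, z, hy, hz, hyc, hzc⟩ := aux_exists T (x ⟨0, hn⟩) hT (hpos _)
    rw [hf] at hyc hzc
    have hK : ∀ i ∈ Finset.univ.filter (fun i => x i ≤ T), x i = y := by
      intro i hi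
      have hi' : x i ≤ T := by simpa using hi
      have hfi := hf i
      rcases lt_trichotomy (x i) y with h | h | h
      · have := aux_inc T _ _ hT (hpos i).le h hy.2
        linarith
      · exact h
      · have := aux_inc T _ _ hT hy.1 h hi'
        linarith
    have hK' : ∀ i ∉ Finset.univ.filter (fun i => x i ≤ T), x i = z := by
      intro i hi
      have hi' : T < x i := by simpa using hi
      have hfi := hf i
      rcases lt_trichotomy (x i) z with h | h | h
      · have := aux_dec T _ _ hT hi'.le h
        linarith
      · exact h
      · have := aux_dec T _ _ hT hz h
        linarith
    refine ⟨Finset.univ.filter (fun i => x i ≤ T), y, z, hy, hz, hyc.trans hzc.symm, ?_, hK, hK'⟩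
    generalize Finset.univ.filter (fun i => x i ≤ T) = K at hK hK'
    have hsum := hx.2
    rw [← Finset.sum_add_sum_compl K, Finset.sum_congr rfl hK,
      Finset.sum_congr rfl (fun i hi => hK' i (Finset.mem_compl.1 hi)), Finset.sum_const,
      Finset.sum_const, nsmul_eq_mul, nsmul_eq_mul, Finset.card_compl,
      Nat.cast_sub (Finset.card_le_univ K), Fintype.card_fin] at hsum
    exact hsum
  · rintro ⟨K, y, z, hy, hz, hyz, -, hK, hK'⟩
    have hf : ∀ i, x i = z * Real.exp (-z / T) * Real.exp (x i / T) := by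
      intro i
      have h1 : x i * Real.exp (-x i / T) = z * Real.exp (-z / T) := by
        by_cases hi : i ∈ K
        · rw [hK i hi, hyz]
        · rw [hK' i hi]
      rw [← h1, mul_assoc, ← Real.exp_add]
      simp [neg_div]
    have hsum := hx.2
    rw [Finset.sum_congr rfl (fun i _ => hf i), ← Finset.mul_sum] at hsum
    funext i
    change Real.exp (x i / T) / ∑ k, Real.exp (x k / T) = x i
    rw [div_eq_iff hS.ne']
    calc Real.exp (x i / T)
        = (z * Real.exp (-z / T) * ∑ k, Real.exp (x k / T)) * Real.exp (x i / T) := by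
          rw [hsum, one_mul]
      _ = (z * Real.exp (-z / T) * Real.exp (x i / T)) * ∑ k, Real.exp (x k / T) := by ring
      _ = x i * ∑ k, Real.exp (x k / T) := by rw [← hf i]
end
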